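/- arXiv:2102.06085 — 4 statements merged into one kernel-verified Lean document; each statement's English description precedes it below -/
import Mathlib

section
/- Let θ ∈ (0,1), T > 0, and let e : [0,T] → ℝ be θ-Hölder continuous. Let B ⊆ [0,T] be a closed set whose θ-dimensional Hausdorff measure is zero, H^θ(B) = 0. Assume that at every point t of [0,T] ∖ B the function e is differentiable with e'(t) = 0. Then e(t) = e(0) for all t ∈ [0,T]. -/
/-!
The image `e '' [0,T]` is Lebesgue null. On `B`, a `θ`-Hölder map sends an `H^θ`-null set to an
`H^1`-null set, and `H^1` is Lebesgue measure on `ℝ`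
(`HolderOnWith.hausdorffMeasure_image_le`, `hausdorffMeasure_real`). Off `B` the derivative
vanishes, so Sard's lemma in equal dimension
(`addHaar_image_eq_zero_of_det_fderivWithin_eq_zero`) gives a null image.
Since `e` is continuous and `[0,T]` is connected, the image contains the segment between any two of
its values, and a null segment is a point.
-/

open MeasureTheory Set

/-- A `θ`-Hölder continuous function on `[0,T]` whose derivative vanishes off a closed
set `B ⊆ [0,T]` of zero `θ`-dimensional Hausdorff measure is constant. -/
theorem holder_constant_of_deriv_zero_off_null_set
    (θ T : ℝ) (hθ0 : 0 < θ) (hθ1 : θ < 1) (hT : 0 < T)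
    (e : ℝ → ℝ) (C : ℝ) (hC : 0 < C)
    (hHolder : ∀ s ∈ Set.Icc (0:ℝ) T, ∀ t ∈ Set.Icc (0:ℝ) T,
      |e t - e s| ≤ C * |t - s| ^ θ)
    (B : Set ℝ) (hBsub : B ⊆ Set.Icc 0 T) (hBclosed : IsClosed B)
    (hBnull : μH[θ] B = 0)
    (hderiv : ∀ t ∈ Set.Icc (0:ℝ) T \ B, HasDerivWithinAt e 0 (Set.Icc 0 T) t) :
    ∀ t ∈ Set.Icc (0:ℝ) T, e t = e 0 := by
  have hH : HolderOnWith (.mk C hC.le) (.mk θ hθ0.le) e (Icc 0 T) := by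
    intro x hx y hy
    have h := hHolder y hy x hx
    rw [edist_dist, edist_dist, Real.dist_eq, Real.dist_eq]
    calc ENNReal.ofReal |e x - e y| ≤ ENNReal.ofReal (C * |x - y| ^ θ) :=
          ENNReal.ofReal_le_ofReal h
      _ = _ := by
          rw [ENNReal.ofReal_mul hC.le, ← ENNReal.ofReal_rpow_of_nonneg (abs_nonneg _) hθ0.le,
            ENNReal.ofReal_eq_coe_nnreal hC.le]
          rfl
  have hB : volume (e '' B) = 0 := by
    have h := (hH.mono hBsub).hausdorffMeasure_image_le (d := 1) hθ0 zero_le_one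
    rw [mul_one, NNReal.coe_mk, hBnull, mul_zero, hausdorffMeasure_real] at h
    exact nonpos_iff_eq_zero.1 h
  have hS : volume (e '' (Icc 0 T \ B)) = 0 :=
    addHaar_image_eq_zero_of_det_fderivWithin_eq_zero volume
      (fun x hx => ((hderiv x hx).mono sdiff_subset).hasFDerivWithinAt) (fun x _ => by simp)
  have hI : volume (e '' Icc 0 T) = 0 := by
    rw [← sdiff_union_of_subset hBsub, image_union]
    exact measure_union_null hS hB
  have hconn : (e '' Icc 0 T).OrdConnected :=
    (isPreconnected_Icc.image e (hH.continuousOn hθ0)).ordConnected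
  intro t ht
  have h0 : (0 : ℝ) ∈ Icc 0 T := left_mem_Icc.2 hT.le
  have hseg := measure_mono_null
    (hconn.uIcc_subset (mem_image_of_mem e h0) (mem_image_of_mem e ht)) hI
  rw [Real.volume_interval, ENNReal.ofReal_eq_zero, abs_nonpos_iff, sub_eq_zero] at hseg
  exact hseg
end

section
/- Let θ ∈ (0,1), T > 0, and let e : [0,T] → ℝ be θ-Hölder continuous and not constant. Let B ⊆ [0,T] be a closed set such that at every point t of [0,T] ∖ B the function e is differentiable with e'(t) = 0. Then H^θ(B) > 0; in particular the Hausdorff dimension of B is at least θ. -/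
open MeasureTheory Set

/-!
A map that is `θ`-Hölder on `B` sends an `H^θ`-null set to an `H^1`-null set, that is, a Lebesgue
null set. Off `B` the derivative vanishes, so by the easy case of Sard's theorem the image of
`[0,T] \ B` is Lebesgue null too. If `H^θ(B)` were zero, then `e([0,T])` would be Lebesgue null;
but by the intermediate value theorem it contains the nondegenerate interval between two distinct
values of `e`.
-/

/-- If a `θ`-Hölder continuous function on `[0,T]` is not constant and its derivative
vanishes off a closed set `B ⊆ [0,T]`, then `B` has positive `θ`-dimensional Hausdorff
measure; in particular `dim_H(B) ≥ θ`. -/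
theorem hausdorff_measure_pos_of_nonconstant_holder
    (θ T : ℝ) (hθ0 : 0 < θ) (hθ1 : θ < 1) (hT : 0 < T)
    (e : ℝ → ℝ) (C : ℝ) (hC : 0 < C)
    (hHolder : ∀ s ∈ Set.Icc (0:ℝ) T, ∀ t ∈ Set.Icc (0:ℝ) T,
      |e t - e s| ≤ C * |t - s| ^ θ)
    (hnonconst : ∃ s ∈ Set.Icc (0:ℝ) T, ∃ t ∈ Set.Icc (0:ℝ) T, e s ≠ e t)
    (B : Set ℝ) (hBsub : B ⊆ Set.Icc 0 T) (hBclosed : IsClosed B)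
    (hderiv : ∀ t ∈ Set.Icc (0:ℝ) T \ B, HasDerivWithinAt e 0 (Set.Icc 0 T) t) :
    0 < μH[θ] B ∧ ENNReal.ofReal θ ≤ dimH B := by
  have hHol : HolderOnWith C.toNNReal θ.toNNReal e (Icc 0 T) := by
    intro s hs t ht
    have h := hHolder t ht s hs
    rw [edist_dist, edist_dist, Real.dist_eq, Real.dist_eq, Real.coe_toNNReal θ hθ0.le,
      ENNReal.ofReal_rpow_of_nonneg (abs_nonneg _) hθ0.le]
    change _ ≤ ENNReal.ofReal C * _
    rw [← ENNReal.ofReal_mul hC.le]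
    exact ENNReal.ofReal_le_ofReal h
  have hne : μH[θ] B ≠ 0 := by
    intro h0
    have hB : volume (e '' B) = 0 := by
      have h := (hHol.mono hBsub).hausdorffMeasure_image_le
        (Real.toNNReal_pos.2 hθ0) zero_le_one
      rw [mul_one, Real.coe_toNNReal θ hθ0.le, h0, mul_zero, hausdorffMeasure_real] at h
      exact nonpos_iff_eq_zero.1 h
    have hcompl : volume (e '' (Icc 0 T \ B)) = 0 := by
      refine addHaar_image_eq_zero_of_det_fderivWithin_eq_zero volume (f' := fun _ => 0)
        (fun t ht => ?_) (fun t _ => ?_)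
      · simpa using ((hderiv t ht).mono sdiff_subset).hasFDerivWithinAt
      · simp [ContinuousLinearMap.det]
    have hall : volume (e '' Icc 0 T) = 0 := by
      rw [← union_sdiff_cancel hBsub, image_union]
      exact measure_union_null hB hcompl
    obtain ⟨s, hs, t, ht, hst⟩ := hnonconst
    have hcont : ContinuousOn e (Icc 0 T) := hHol.continuousOn (Real.toNNReal_pos.2 hθ0)
    have hsub : uIcc (e s) (e t) ⊆ e '' Icc 0 T :=
      (isPreconnected_Icc.image e hcont).ordConnected.uIcc_subset
        (mem_image_of_mem e hs) (mem_image_of_mem e ht)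
    have h := measure_mono_null hsub hall
    rw [Real.volume_interval, ENNReal.ofReal_eq_zero, abs_nonpos_iff, sub_eq_zero] at h
    exact hst h.symm
  refine ⟨pos_iff_ne_zero.2 hne, ?_⟩
  refine le_dimH_of_hausdorffMeasure_ne_zero (d := θ.toNNReal) ?_
  rwa [Real.coe_toNNReal θ hθ0.le]
end

section
/- Let 0 < β < 1/3 and let v ∈ C^β(𝕋³×[0,T]) be a non-conservative weak solution of the incompressible Euler equations. If B ⊆ [0,T] is a closed set such that v is C^∞ (in space and time) on 𝕋³ × ([0,T] ∖ B), then H^{2β/(1−β)}(B) > 0; in particular the Hausdorff dimension of B satisfies dim_H(B) ≥ 2β/(1−β). -/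
/-!
The proof is a time-localized version of the argument behind the positive half of Onsager's
conjecture, in the form due to Constantin–E–Titi and Duchon–Robert.

Let `K` be a smooth, even, periodic kernel at scale `ℓ`, and consider the regularized energy
`corr K v v = ∫ v · (K ∗ v)`. Testing the equation with `η(t) (K ∗ b)(x)` for a fixed
divergence-free field `b` shows that `r ↦ corr K (v r) b` is differentiable
(`hasDerivAt_of_weak`, `GlobalFlow.hasDerivAt_corr`); freezing each argument in turn gives the
derivative `-2 flux K v v` of the regularized energy (`GlobalFlow.hasDerivAt_corr_diag`). If `v` has
oscillation at most `A` at scale `ℓ`, then after normalizing by `∫ K` the regularized energy differs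
from `∫ |v|²` by `O(A²)` since the difference is quadratic in the increments of `v`
(`energy_defect`), while the flux is `O(A³/ℓ)` since it is cubic in them (`flux_eq_increments`).
Hence `|e(t) - e(s)| ≤ 2 A² + D (A³/ℓ) |t - s|` (`exists_energy_increment_le`).

This estimate is used twice.
* For a `C^β` solution `A = C ℓ^β`, and the choice `ℓ = (|t - s|/T)^(1/(1-β))` makes the energy
  `2β/(1-β)`-Hölder on `[0,T]` (`WeakEuler.exists_energy_holder`).
* Near a time in `(0,T) ∖ B` the solution is Lipschitz, so `A = L ℓ`; letting `ℓ → 0` shows that the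
  energy is locally constant there (`WeakEuler.energy_locally_const`).

If `B` had zero `2β/(1-β)`-dimensional Hausdorff measure, its image under the energy would be a
Lebesgue null set. The image of `(0,T) ∖ B` is countable, so the range of the energy would be null,
whereas the intermediate value theorem puts a nondegenerate interval in the range of a non-constant
continuous function (`hausdorffMeasure_ne_zero_of_holder`).
-/

noncomputable section

open MeasureTheory Real Set

/-! Basic setup: we model the flat torus `𝕋³ = ℝ³/ℤ³` by working with `ℤ³`-periodic
functions on `ℝ³ = Fin 3 → ℝ`, with the unit cube as fundamental domain. -/

abbrev V3 : Type := Fin 3 → ℝ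
abbrev M3 : Type := Fin 3 → Fin 3 → ℝ

/-- The unit cube, a fundamental domain for `𝕋³` (of volume `1`). -/
def cube : Set V3 := {x | ∀ i, x i ∈ Set.Icc (0:ℝ) 1}

/-- `ℤ³`-periodicity: functions on the torus `𝕋³`. -/
def Per {α : Type*} (f : V3 → α) : Prop :=
  ∀ (x : V3) (n : Fin 3 → ℤ), f (x + fun i => (n i : ℝ)) = f x

/-- Partial derivative in the `i`-th coordinate direction. -/
def pd (f : V3 → ℝ) (i : Fin 3) (x : V3) : ℝ := fderiv ℝ f x (Pi.single i 1)

/-- Divergence of a vector field on `ℝ³`. -/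
def divg (u : V3 → V3) (x : V3) : ℝ := ∑ i, pd (fun y => u y i) i x

section Norms
variable {E : Type*} [NormedAddCommGroup E] [NormedSpace ℝ E]

/-- The spatial `C^j` seminorm `[f]_j` (sup of the `j`-th derivative). -/
def semiJ (j : ℕ) (f : V3 → E) : ℝ := ⨆ x : V3, ‖iteratedFDeriv ℝ j f x‖

/-- The spatial `C^N` norm `‖f‖_N`. -/
def normC (N : ℕ) (f : V3 → E) : ℝ := ∑ j ∈ Finset.range (N+1), semiJ j f

/-- The spatial Hölder seminorm `[f]_{N+α}` (for `α > 0`; at `x = y` the quotient is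
junk `0/0 = 0`). -/
def semiH (N : ℕ) (α : ℝ) (f : V3 → E) : ℝ :=
  ⨆ x : V3, ⨆ y : V3, ‖iteratedFDeriv ℝ N f x - iteratedFDeriv ℝ N f y‖ / ‖x - y‖ ^ α

/-- The spatial Hölder norm `‖f‖_{N+α}`. -/
def normH (N : ℕ) (α : ℝ) (f : V3 → E) : ℝ := normC N f + semiH N α f

/-- `‖f‖_N` for time dependent functions: sup over a time set `S` of spatial `C^N` norms. -/
def tN (S : Set ℝ) (N : ℕ) (f : ℝ → V3 → E) : ℝ := ⨆ t : S, normC N (f t.1)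

/-- `‖f‖_{N+α}` for time dependent functions. -/
def tH (S : Set ℝ) (N : ℕ) (α : ℝ) (f : ℝ → V3 → E) : ℝ := ⨆ t : S, normH N α (f t.1)

/-- `[f]_N` for time dependent functions. -/
def tSemiJ (S : Set ℝ) (j : ℕ) (f : ℝ → V3 → E) : ℝ := ⨆ t : S, semiJ j (f t.1)

/-- `[f]_{N+α}` for time dependent functions. -/
def tSemiH (S : Set ℝ) (N : ℕ) (α : ℝ) (f : ℝ → V3 → E) : ℝ := ⨆ t : S, semiH N α (f t.1)

-- The `C^α` norm `‖f‖_α` for `0 ≤ α ≤ 1` (just the sup norm if `α = 0`).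
open Classical in
def cA (α : ℝ) (f : V3 → E) : ℝ := semiJ 0 f + (if α = 0 then 0 else semiH 0 α f)

-- The Hölder norm `‖f‖_r` for a real exponent `r = N + s`, `s ∈ [0,1)`.
open Classical in
def hNormR (r : ℝ) (f : V3 → E) : ℝ :=
  normC ⌊r⌋₊ f + (if r = (⌊r⌋₊ : ℝ) then 0 else semiH ⌊r⌋₊ (r - (⌊r⌋₊ : ℝ)) f)

/-- Joint smoothness in space and time. -/
def SmoothST (f : ℝ → V3 → E) : Prop :=
  ContDiff ℝ (⊤:ℕ∞) (fun p : ℝ × V3 => f p.1 p.2)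

end Norms

/-! Weak solutions of the incompressible Euler equations. -/

/-- `v` is a weak solution of the incompressible Euler equations on `𝕋³ × [0,T]`:
it is continuous, periodic, weakly divergence-free, and satisfies the Euler equations
tested against smooth, divergence-free, periodic test vector fields compactly
supported in time inside `(0,T)`. -/
structure WeakEuler (T : ℝ) (v : ℝ → V3 → V3) : Prop where
  cont : ContinuousOn (fun p : ℝ × V3 => v p.1 p.2) (Set.Icc 0 T ×ˢ Set.univ)
  per : ∀ t, Per (v t)
  divfree : ∀ ψ : V3 → ℝ, ContDiff ℝ (⊤:ℕ∞) ψ → Per ψ → ∀ t ∈ Set.Icc (0:ℝ) T,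
    ∫ x in cube, ∑ i, v t x i * pd ψ i x = 0
  weak : ∀ φ : ℝ → V3 → V3, SmoothST φ → (∀ t, Per (φ t)) →
    (∃ K : Set ℝ, IsCompact K ∧ K ⊆ Set.Ioo 0 T ∧ ∀ t ∉ K, ∀ x, φ t x = 0) →
    (∀ t x, divg (φ t) x = 0) →
    ∫ t in Set.Ioo (0:ℝ) T, ∫ x in cube,
      ((∑ i, v t x i * deriv (fun s => φ s x i) t)
        + ∑ i, ∑ j, v t x i * v t x j * pd (fun y => φ t y i) j x) = 0

/-- The kinetic energy `e_v(t) = ½∫_{𝕋³} |v(x,t)|² dx`. -/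
def energy (v : ℝ → V3 → V3) (t : ℝ) : ℝ := (1/2) * ∫ x in cube, ∑ i, (v t x i)^2

/-- `v` is a smooth (classical) solution of the incompressible Euler equations on
`𝕋³ × [0,T]`, with some smooth periodic pressure. -/
structure SmoothEuler (T : ℝ) (v : ℝ → V3 → V3) : Prop where
  smooth : SmoothST v
  per : ∀ t, Per (v t)
  divfree : ∀ t x, divg (v t) x = 0
  momentum : ∃ p : ℝ → V3 → ℝ, SmoothST p ∧ (∀ t, Per (p t)) ∧
    ∀ t ∈ Set.Icc (0:ℝ) T, ∀ x k,
      deriv (fun s => v s x k) t + (∑ j, pd (fun y => v t y j * v t y k) j x)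
        + pd (p t) k x = 0

/-! The Euler–Reynolds system. -/

/-- The smooth pair `(v,R)` solves the Euler–Reynolds system on `𝕋³ × [0,T]`:
`∂ₜv + div(v ⊗ v) + ∇p = div R`, `div v = 0`, where `p` is the (zero-average) pressure. -/
structure EulerReynolds (T : ℝ) (v : ℝ → V3 → V3) (R : ℝ → V3 → M3) : Prop where
  smooth_v : SmoothST v
  smooth_R : SmoothST R
  per_v : ∀ t, Per (v t)
  per_R : ∀ t, Per (R t)
  symm_R : ∀ t x i j, R t x i j = R t x j i
  divfree : ∀ t x, divg (v t) x = 0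
  momentum : ∃ p : ℝ → V3 → ℝ, SmoothST p ∧ (∀ t, Per (p t)) ∧
    (∀ t, ∫ x in cube, p t x = 0) ∧
    ∀ t ∈ Set.Icc (0:ℝ) T, ∀ x k,
      deriv (fun s => v s x k) t + (∑ j, pd (fun y => v t y j * v t y k) j x)
        + pd (p t) k x
      = ∑ j, pd (fun y => R t y j k) j x

/-! Parameters of the convex integration scheme. -/

/-- Frequency parameter `λ_q = 2π⌈a^(b^q)⌉`. -/
def lam (a b : ℝ) (q : ℕ) : ℝ := 2 * Real.pi * (⌈a ^ (b ^ q)⌉ : ℝ)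

/-- Amplitude parameter `δ_q = λ_q^(-2β)`. -/
def del (a b β : ℝ) (q : ℕ) : ℝ := lam a b q ^ (-(2*β))

/-- `θ_q = δ_{q-1}^{-1/2} λ_{q-1}^{-1-3α}` (for `q ≥ 1`). -/
def theta (a b β α : ℝ) (q : ℕ) : ℝ :=
  del a b β (q-1) ^ (-(1/2 : ℝ)) * lam a b (q-1) ^ (-(1+3*α))

/-- `τ_q = λ_{q-1}^{-γ} θ_q` for `q ≥ 1`, and `τ_0 = T/15`. -/
def tau (T a b β α γ : ℝ) (q : ℕ) : ℝ :=
  if q = 0 then T/15 else lam a b (q-1) ^ (-γ) * theta a b β α q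

/-- Mollification parameter `ℓ_q = δ_{q+1}^{1/2} δ_q^{-1/2} λ_q^{-1-γ/2-3α/2}`. -/
def ell (a b β α γ : ℝ) (q : ℕ) : ℝ :=
  del a b β (q+1) ^ ((1:ℝ)/2) * del a b β q ^ (-(1/2 : ℝ)) * lam a b q ^ (-(1 + γ/2 + 3*α/2))

/-! Good and bad sets of times. -/

/-- The good set `𝒢 = [0,T] ∖ ℬ`. -/
def goodSet (T : ℝ) (B : Set ℝ) : Set ℝ := Set.Icc 0 T \ B

/-- The "real" bad set `𝓑̂ = {t ∈ [0,T] : dist(t,𝒢) > τ}`. -/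
def farBad (T τ : ℝ) (B : Set ℝ) : Set ℝ :=
  {t ∈ Set.Icc (0:ℝ) T | τ < Metric.infDist t (goodSet T B)}

/-- The step-`q` properties (i), (iii), (vi), (vii) of the bad set `ℬ_q` and of the pair
`(v_q, R_q)`; `Cv N` are the universal constants in property (vii). -/
structure StepProps (T a b β α γ : ℝ) (Cv : ℕ → ℝ) (q : ℕ)
    (v : ℝ → V3 → V3) (R : ℝ → V3 → M3) (B : Set ℝ) : Prop where
  subset : B ⊆ Set.Icc 0 T
  /-- (i) `𝒢₀ = [0,T/3] ∪ [2T/3,T]`. -/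
  init : q = 0 → B = Set.Ioo (T/3) (2*T/3)
  /-- (iii) `ℬ_q` is a finite union of disjoint open intervals of length `5τ_q`. -/
  intervals : ∃ F : Finset ℝ,
    (B = ⋃ c ∈ F, Set.Ioo c (c + 5 * tau T a b β α γ q)) ∧
    (F : Set ℝ).Pairwise (fun c d =>
      Disjoint (Set.Ioo c (c + 5 * tau T a b β α γ q))
        (Set.Ioo d (d + 5 * tau T a b β α γ q)))
  /-- (vi) the Reynolds stress vanishes outside `𝓑̂_q`. -/
  suppR : ∀ t ∈ Set.Icc (0:ℝ) T, t ∉ farBad T (tau T a b β α γ q) B → ∀ x, R t x = 0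
  /-- (vii) improved estimates outside `𝓑̂_q` (for `q ≥ 1`). -/
  better : ∀ N : ℕ, 1 ≤ q → ∀ t ∈ Set.Icc (0:ℝ) T, t ∉ farBad T (tau T a b β α γ q) B →
    normC (N+1) (v t) ≤ Cv N * del a b β (q-1) ^ ((1:ℝ)/2) * lam a b (q-1)
      * ell a b β α γ (q-1) ^ (-(N:ℝ))

/-- The properties (ii), (iv), (v) linking step `q` to step `q+1`. -/
structure LinkProps (T a b β α γ : ℝ) (q : ℕ)
    (vold vnew : ℝ → V3 → V3) (Bold Bnew : Set ℝ) : Prop where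
  /-- (ii) `𝒢_q ⊆ 𝒢_{q+1}`. -/
  mono : goodSet T Bold ⊆ goodSet T Bnew
  /-- (iv) `|ℬ_{q+1}| ≤ 10 (τ_{q+1}/θ_{q+1}) |ℬ_q|`. -/
  size : volume Bnew ≤ ENNReal.ofReal (10 * tau T a b β α γ (q+1) / theta a b β α (q+1))
    * volume Bold
  /-- (v) `v_{q+1} = v_q` on `𝒢_q`. -/
  agree : ∀ t ∈ goodSet T Bold, ∀ x, vnew t x = vold t x

/-- The material derivative `(∂ₜ + v·∇)R` of a matrix-valued field. -/
def matD (v : ℝ → V3 → V3) (R : ℝ → V3 → M3) : ℝ → V3 → M3 :=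
  fun t x i j => deriv (fun s => R s x i j) t + ∑ k, v t x k * pd (fun y => R t y i j) k x

/-! Mollification. -/

/-- A standard smooth compactly supported radial nonnegative mollification kernel on `ℝ³`. -/
structure StdKernel (φ : V3 → ℝ) : Prop where
  smooth : ContDiff ℝ (⊤:ℕ∞) φ
  compSupp : HasCompactSupport φ
  radial : ∀ x y : V3, ‖x‖ = ‖y‖ → φ x = φ y
  nonneg : ∀ x, 0 ≤ φ x
  int_one : ∫ x : V3, φ x = 1

/-- Mollification at scale `ℓ`: `(f ∗ φ_ℓ)(x)` with `φ_ℓ(y) = ℓ⁻³ φ(y/ℓ)`. -/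
def mollify {E : Type*} [NormedAddCommGroup E] [NormedSpace ℝ E]
    (φ : V3 → ℝ) (ℓ : ℝ) (f : V3 → E) (x : V3) : E :=
  ∫ y : V3, (ℓ ^ (-(3:ℝ)) * φ (ℓ⁻¹ • y)) • f (x - y)

open scoped Topology ContDiff

/-! ### Integration over the torus -/

lemma cube_eq_Icc : cube = Set.Icc (0 : V3) 1 := by
  ext x
  simp only [cube, Set.mem_ofPred_eq, Set.mem_Icc, Pi.le_def, Pi.zero_apply, Pi.one_apply]
  exact forall_and

lemma isCompact_cube : IsCompact cube := cube_eq_Icc ▸ isCompact_Icc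

lemma measurableSet_cube : MeasurableSet cube := isCompact_cube.isClosed.measurableSet

lemma volume_cube_lt_top : volume cube < ⊤ := isCompact_cube.measure_lt_top

lemma volume_real_cube : volume.real cube = 1 := by
  rw [cube_eq_Icc, measureReal_def, Real.volume_Icc_pi]
  simp

lemma integrableOn_cube {E : Type*} [NormedAddCommGroup E] {f : V3 → E} (hf : Continuous f) :
    IntegrableOn f cube :=
  hf.continuousOn.integrableOn_compact isCompact_cube

lemma continuous_cube_integral {X E : Type*} [TopologicalSpace X] [FirstCountableTopology X]
    [LocallyCompactSpace X] [NormedAddCommGroup E] [NormedSpace ℝ E]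
    {f : X → V3 → E} (hf : Continuous f.uncurry) :
    Continuous (fun x => ∫ y in cube, f x y) :=
  continuous_parametric_integral_of_continuous hf isCompact_cube

lemma cube_integral_swap {f : V3 → V3 → ℝ} (hf : Continuous f.uncurry) :
    ∫ x in cube, ∫ y in cube, f x y = ∫ y in cube, ∫ x in cube, f x y := by
  refine integral_integral_swap ?_
  rw [Measure.prod_restrict]
  exact hf.continuousOn.integrableOn_compact (isCompact_cube.prod isCompact_cube)

/-- Up to a null set the closed cube is the half-open fundamental domain of `ℤ³`, for which
Mathlib has translation invariance of integrals of periodic functions. -/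
lemma cube_ae_eq : cube =ᵐ[volume] ZSpan.fundamentalDomain (Pi.basisFun ℝ (Fin 3)) := by
  rw [ZSpan.fundamentalDomain_pi_basisFun, cube_eq_Icc]
  have h := (Measure.univ_pi_Ico_ae_eq_Icc (μ := fun _ : Fin 3 => (volume : Measure ℝ))
    (f := 0) (g := 1)).symm
  simpa [volume_pi] using h

/-- Integrals over the unit cube of periodic functions are translation invariant. -/
lemma Per.integral_add {f : V3 → ℝ} (hf : Per f) (a : V3) :
    ∫ x in cube, f (a + x) = ∫ x in cube, f x := by
  set D := ZSpan.fundamentalDomain (Pi.basisFun ℝ (Fin 3)) with hD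
  have h1 := ZSpan.isAddFundamentalDomain' (Pi.basisFun ℝ (Fin 3)) (volume : Measure V3)
  have h2 := h1.vadd_of_comm a
  have hinv : ∀ (g : (Submodule.span ℤ (Set.range (Pi.basisFun ℝ (Fin 3)))).toAddSubgroup)
      (x : V3), f (g +ᵥ x) = f x := by
    rintro ⟨g, hg⟩ x
    have hg' : ∃ n : Fin 3 → ℤ, g = fun i => (n i : ℝ) := by
      have hg2 : g ∈ Submodule.span ℤ (Set.range (Pi.basisFun ℝ (Fin 3))) := hg
      rw [Module.Basis.mem_span_iff_repr_mem] at hg2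
      choose n hn using hg2
      exact ⟨n, funext fun i => by simpa using (hn i).symm⟩
    obtain ⟨n, rfl⟩ := hg'
    change f ((fun i => (n i : ℝ)) + x) = f x
    rw [add_comm]
    exact hf x n
  have : Countable (Submodule.span ℤ (Set.range (Pi.basisFun ℝ (Fin 3)))).toAddSubgroup :=
    inferInstanceAs (Countable (Submodule.span ℤ (Set.range (Pi.basisFun ℝ (Fin 3)))))
  rw [setIntegral_congr_set cube_ae_eq, setIntegral_congr_set cube_ae_eq, ← hD,
    h1.setIntegral_eq h2 hinv, ← Set.image_vadd]
  exact ((measurePreserving_vadd a (volume : Measure V3)).setIntegral_image_emb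
    (measurableEmbedding_const_vadd a) f D).symm

/-- Differentiation under the integral sign for an average of translates of a kernel. -/
lemma hasFDerivAt_cube_conv {F : Type*} [NormedAddCommGroup F] [NormedSpace ℝ F] {K : V3 → F}
    (hK : ContDiff ℝ 1 K) {b : V3 → ℝ} (hb : Continuous b) (x : V3) :
    HasFDerivAt (fun x => ∫ y in cube, b y • K (y - x))
      (∫ y in cube, b y • (-fderiv ℝ K (y - x))) x := by
  have hK0 : Continuous K := hK.continuous
  have hK1 : Continuous (fderiv ℝ K) := hK.continuous_fderiv one_ne_zero
  have hcont : Continuous (fun p : V3 × V3 => b p.2 • (-fderiv ℝ K (p.2 - p.1))) := by fun_prop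
  obtain ⟨M, hM⟩ := ((isCompact_closedBall x 1).prod isCompact_cube).exists_bound_of_continuousOn
    hcont.continuousOn
  refine hasFDerivAt_integral_of_dominated_of_fderiv_le (bound := fun _ => M)
    (F' := fun x y => b y • (-fderiv ℝ K (y - x)))
    (Metric.closedBall_mem_nhds x one_pos) ?_ ?_ ?_ ?_ ?_ ?_
  · exact Filter.Eventually.of_forall fun z =>
      (integrableOn_cube (f := fun y => b y • K (y - z)) (by fun_prop)).aestronglyMeasurable
  · exact integrableOn_cube (f := fun y => b y • K (y - x)) (by fun_prop)
  · exact (integrableOn_cube (f := fun y => b y • (-fderiv ℝ K (y - x)))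
      (by fun_prop)).aestronglyMeasurable
  · refine (ae_restrict_iff' measurableSet_cube).2 (Filter.Eventually.of_forall ?_)
    intro y hy z hz
    exact hM (z, y) ⟨hz, hy⟩
  · exact integrableOn_cube continuous_const
  · refine Filter.Eventually.of_forall fun y z _ => ?_
    have h := ((hK.differentiable one_ne_zero) (y - z)).hasFDerivAt.comp z
      ((hasFDerivAt_id z).const_sub y)
    have h2 := h.const_smul (b y)
    refine h2.congr_fderiv ?_
    ext w
    simp

/-- The target space is generalized for the induction on the order of differentiability, because
`fderiv ℝ K` takes values in the dual of `V3`. -/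
lemma contDiff_cube_conv_nat (n : ℕ) : ∀ {F : Type} [NormedAddCommGroup F] [NormedSpace ℝ F]
    {K : V3 → F} (_ : ContDiff ℝ ∞ K) {b : V3 → ℝ} (_ : Continuous b),
    ContDiff ℝ n (fun x => ∫ y in cube, b y • K (y - x)) := by
  induction n with
  | zero =>
    intro F _ _ K hK b hb
    have hK0 : Continuous K := hK.continuous
    refine contDiff_zero.2 (continuous_cube_integral ?_)
    simp only [Function.uncurry_def]
    fun_prop
  | succ n ih =>
    intro F _ _ K hK b hb
    have hd := fun x => hasFDerivAt_cube_conv (hK.of_le (by simp)) hb x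
    rw [Nat.cast_succ, contDiff_succ_iff_fderiv]
    refine ⟨fun x => (hd x).differentiableAt, by simp, ?_⟩
    rw [show fderiv ℝ (fun x => ∫ y in cube, b y • K (y - x)) = _ from
      funext fun x => (hd x).fderiv]
    exact ih (K := fun z => -fderiv ℝ K z) (contDiff_infty_iff_fderiv.1 hK).2.neg hb

lemma contDiff_cube_conv {K : V3 → ℝ} (hK : ContDiff ℝ ∞ K) {b : V3 → ℝ} (hb : Continuous b) :
    ContDiff ℝ ∞ (fun x => ∫ y in cube, b y • K (y - x)) :=
  contDiff_infty.2 fun n => contDiff_cube_conv_nat n hK hb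

lemma pd_cube_conv {K : V3 → ℝ} (hK : ContDiff ℝ ∞ K) {b : V3 → ℝ} (hb : Continuous b)
    (j : Fin 3) (x : V3) :
    pd (fun x => ∫ y in cube, b y • K (y - x)) j x = -∫ y in cube, b y * pd K j (y - x) := by
  have hK1 : Continuous (fderiv ℝ K) := hK.continuous_fderiv (by simp)
  rw [pd, (hasFDerivAt_cube_conv (hK.of_le (by simp)) hb x).fderiv,
    ContinuousLinearMap.integral_apply, ← integral_neg]
  · refine integral_congr_ae (Filter.Eventually.of_forall fun y => ?_)
    simp [pd]
  · exact integrableOn_cube (f := fun y => b y • (-fderiv ℝ K (y - x))) (by fun_prop)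

/-! ### Periodic kernels and increment identities -/

/-- A continuous, periodic and weakly divergence-free vector field. -/
structure DivFreeField (u : V3 → V3) : Prop where
  cont : Continuous u
  per : Per u
  divfree : ∀ ψ : V3 → ℝ, ContDiff ℝ ∞ ψ → Per ψ → ∫ x in cube, ∑ i, u x i * pd ψ i x = 0

/-- A smooth, periodic and even convolution kernel (not normalized). -/
structure PerKernel (K : V3 → ℝ) : Prop where
  smooth : ContDiff ℝ ∞ K
  per : Per K
  even : ∀ z, K (-z) = K z

/-- The correlation `∫∫ K(y - x) a(x)·b(y) dy dx`, that is, `∫ a · (K ∗ b)`. -/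
def corr (K : V3 → ℝ) (a b : V3 → V3) : ℝ :=
  ∫ x in cube, ∫ y in cube, K (y - x) * ∑ i, a x i * b y i

/-- The trilinear quantity `∫∫ (∇K(y - x)·a(x)) (a(x)·b(y)) dy dx = -∫ a ⊗ a : ∇(K ∗ b)`. -/
def flux (K : V3 → ℝ) (a b : V3 → V3) : ℝ :=
  ∫ x in cube, ∫ y in cube, (∑ j, pd K j (y - x) * a x j) * ∑ i, a x i * b y i

lemma PerKernel.continuous_pd {K : V3 → ℝ} (hK : PerKernel K) (j : Fin 3) :
    Continuous (pd K j) :=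
  (hK.smooth.continuous_fderiv (by simp)).clm_apply continuous_const

lemma pd_comp_sub_right (K : V3 → ℝ) (j : Fin 3) (a x : V3) :
    pd (fun y => K (y - a)) j x = pd K j (x - a) := by
  simp only [pd, sub_eq_add_neg, fderiv_comp_add_right]

lemma pd_comp_sub_left {K : V3 → ℝ} (hK : Differentiable ℝ K) (j : Fin 3) (a x : V3) :
    pd (fun y => K (a - y)) j x = -pd K j (a - x) := by
  have h := (hK (a - x)).hasFDerivAt.comp x ((hasFDerivAt_id x).const_sub a)
  have h2 : fderiv ℝ (fun y => K (a - y)) x = _ := h.fderiv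
  simp [pd, h2]

lemma PerKernel.differentiable {K : V3 → ℝ} (hK : PerKernel K) : Differentiable ℝ K :=
  hK.smooth.differentiable (by simp)

lemma PerKernel.pd_neg {K : V3 → ℝ} (hK : PerKernel K) (j : Fin 3) (z : V3) :
    pd K j (-z) = -pd K j z := by
  have h := pd_comp_sub_left hK.differentiable j 0 z
  simp only [zero_sub, hK.even] at h
  linarith [show pd (fun y => K y) j z = pd K j z from rfl]

lemma PerKernel.sub_comm {K : V3 → ℝ} (hK : PerKernel K) (x y : V3) : K (x - y) = K (y - x) := by
  rw [← neg_sub, hK.even]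

lemma PerKernel.pd_sub_comm {K : V3 → ℝ} (hK : PerKernel K) (j : Fin 3) (x y : V3) :
    pd K j (x - y) = -pd K j (y - x) := by
  rw [← neg_sub, hK.pd_neg]

lemma PerKernel.per_pd {K : V3 → ℝ} (hK : PerKernel K) (j : Fin 3) : Per (pd K j) := by
  intro x n
  have h : (fun y => K (y + fun i => (n i : ℝ))) = K := funext fun y => hK.per y n
  have h2 := fderiv_comp_add_right (𝕜 := ℝ) (f := K) (x := x) (fun i => (n i : ℝ))
  rw [h] at h2
  simp only [pd, h2]

lemma PerKernel.per_sub_right {K : V3 → ℝ} (hK : PerKernel K) (a : V3) :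
    Per (fun y => K (y - a)) := by
  intro x n
  have := hK.per (x - a) n
  simp only [← this]
  congr 1
  abel

lemma PerKernel.per_sub_left {K : V3 → ℝ} (hK : PerKernel K) (a : V3) :
    Per (fun y => K (a - y)) := by
  intro x n
  simp only [hK.sub_comm a]
  exact hK.per_sub_right a x n

lemma PerKernel.integral_sub_right {K : V3 → ℝ} (hK : PerKernel K) (x : V3) :
    ∫ y in cube, K (y - x) = ∫ y in cube, K y := by
  rw [← hK.per.integral_add (-x)]
  simp only [neg_add_eq_sub]

lemma PerKernel.integral_pd_sub_right {K : V3 → ℝ} (hK : PerKernel K) (j : Fin 3) (x : V3) :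
    ∫ y in cube, pd K j (y - x) = 0 := by
  have h := pd_cube_conv hK.smooth (b := fun _ => 1) continuous_const j x
  have h2 : (fun x : V3 => ∫ y in cube, (1 : ℝ) • K (y - x)) = fun _ => ∫ y in cube, K y := by
    funext x
    simp only [one_smul, hK.integral_sub_right]
  rw [h2] at h
  simp only [pd, fderiv_const_apply, one_mul] at h
  simp only [pd]
  have : ((0 : V3 →L[ℝ] ℝ) (Pi.single j 1)) = 0 := rfl
  linarith

lemma PerKernel.integral_pd_sub_left {K : V3 → ℝ} (hK : PerKernel K) (j : Fin 3) (y : V3) :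
    ∫ x in cube, pd K j (y - x) = 0 := by
  simp only [hK.pd_sub_comm j y, integral_neg, hK.integral_pd_sub_right, neg_zero]

lemma setIntegral_cube_prod {F : V3 × V3 → ℝ} (hF : Continuous F) :
    ∫ p in cube ×ˢ cube, F p = ∫ x in cube, ∫ y in cube, F (x, y) :=
  setIntegral_prod F (hF.continuousOn.integrableOn_compact (isCompact_cube.prod isCompact_cube))

lemma setIntegral_cube_prod_symm {F : V3 × V3 → ℝ} (hF : Continuous F) :
    ∫ p in cube ×ˢ cube, F p = ∫ y in cube, ∫ x in cube, F (x, y) := by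
  rw [setIntegral_cube_prod hF]
  exact cube_integral_swap hF

lemma integrableOn_cube_prod {F : V3 × V3 → ℝ} (hF : Continuous F) :
    IntegrableOn F (cube ×ˢ cube) :=
  hF.continuousOn.integrableOn_compact (isCompact_cube.prod isCompact_cube)

lemma corr_comm {K : V3 → ℝ} (hK : PerKernel K) {a b : V3 → V3} (ha : Continuous a)
    (hb : Continuous b) : corr K a b = corr K b a := by
  have hK0 := hK.smooth.continuous
  rw [corr, cube_integral_swap (by simp only [Function.uncurry_def]; fun_prop), corr]
  simp only [hK.sub_comm, mul_comm]

/-- The energy lost by averaging is a quadratic average of increments. -/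
lemma energy_defect {K : V3 → ℝ} (hK : PerKernel K) {u : V3 → V3} (hu : Continuous u) :
    ∫ x in cube, ∫ y in cube, K (y - x) * ∑ i, (u y i - u x i) ^ 2
      = 2 * (∫ z in cube, K z) * (∫ x in cube, ∑ i, (u x i) ^ 2) - 2 * corr K u u := by
  have hK0 := hK.smooth.continuous
  have hA : Continuous (fun p : V3 × V3 => K (p.2 - p.1) * ∑ i, (u p.2 i) ^ 2) := by fun_prop
  have hB : Continuous (fun p : V3 × V3 => K (p.2 - p.1) * ∑ i, (u p.1 i) ^ 2) := by fun_prop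
  have hC : Continuous (fun p : V3 × V3 => K (p.2 - p.1) * ∑ i, u p.1 i * u p.2 i) := by fun_prop
  have e : ∀ p : V3 × V3, K (p.2 - p.1) * ∑ i, (u p.2 i - u p.1 i) ^ 2
      = K (p.2 - p.1) * ∑ i, (u p.2 i) ^ 2 + K (p.2 - p.1) * ∑ i, (u p.1 i) ^ 2
        - 2 * (K (p.2 - p.1) * ∑ i, u p.1 i * u p.2 i) := by
    intro p
    simp only [Fin.sum_univ_three]
    ring
  have h0 := setIntegral_cube_prod
    (F := fun p : V3 × V3 => K (p.2 - p.1) * ∑ i, (u p.2 i - u p.1 i) ^ 2) (by fun_prop)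
  have h1 : ∫ p in cube ×ˢ cube, K (p.2 - p.1) * ∑ i, (u p.2 i) ^ 2
      = (∫ z in cube, K z) * (∫ x in cube, ∑ i, (u x i) ^ 2) := by
    rw [setIntegral_cube_prod_symm hA, ← integral_const_mul]
    refine integral_congr_ae (Filter.Eventually.of_forall fun y => ?_)
    simp only [integral_mul_const]
    simp only [hK.sub_comm y, hK.integral_sub_right]
  have h2 : ∫ p in cube ×ˢ cube, K (p.2 - p.1) * ∑ i, (u p.1 i) ^ 2
      = (∫ z in cube, K z) * (∫ x in cube, ∑ i, (u x i) ^ 2) := by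
    rw [setIntegral_cube_prod hB, ← integral_const_mul]
    refine integral_congr_ae (Filter.Eventually.of_forall fun y => ?_)
    simp only [integral_mul_const, hK.integral_sub_right]
  rw [← h0]
  simp only [e]
  rw [integral_sub, integral_add, h1, h2, integral_const_mul, setIntegral_cube_prod hC, corr]
  · ring
  · exact integrableOn_cube_prod hA
  · exact integrableOn_cube_prod hB
  · exact integrableOn_cube_prod (hA.add hB)
  · exact (integrableOn_cube_prod hC).const_mul 2

/-- The divergence condition tested with a translate of `K`. -/
lemma DivFreeField.pd_right {u : V3 → V3} (hu : DivFreeField u) {K : V3 → ℝ} (hK : PerKernel K)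
    (x : V3) : ∫ y in cube, ∑ j, pd K j (y - x) * u y j = 0 := by
  have h := hu.divfree (fun y => K (y - x)) (hK.smooth.comp (contDiff_id.sub contDiff_const))
    (hK.per_sub_right x)
  simpa only [pd_comp_sub_right, mul_comm] using h

lemma DivFreeField.pd_left {u : V3 → V3} (hu : DivFreeField u) {K : V3 → ℝ} (hK : PerKernel K)
    (y : V3) : ∫ x in cube, ∑ j, pd K j (y - x) * u x j = 0 := by
  have h := hu.pd_right hK y
  simp only [hK.pd_sub_comm _ _ y, neg_mul, Finset.sum_neg_distrib, integral_neg, neg_eq_zero] at h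
  exact h

lemma integral_pd_mul_const {K : V3 → ℝ} (hK : PerKernel K) (x : V3) (c : V3) :
    ∫ y in cube, ∑ j, pd K j (y - x) * c j = 0 := by
  have hk := hK.continuous_pd
  rw [integral_finsetSum]
  · simp only [integral_mul_const, hK.integral_pd_sub_right, zero_mul, Finset.sum_const_zero]
  · intro j _
    exact integrableOn_cube (f := fun y => pd K j (y - x) * c j) (by fun_prop)

lemma integral_pd_mul_const' {K : V3 → ℝ} (hK : PerKernel K) (y : V3) (c : V3) :
    ∫ x in cube, ∑ j, pd K j (y - x) * c j = 0 := by
  have h := integral_pd_mul_const hK y c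
  simp only [hK.pd_sub_comm _ _ y, neg_mul, Finset.sum_neg_distrib, integral_neg, neg_eq_zero] at h
  exact h

/-- The cubic increment identity of Duchon and Robert: for a divergence-free field, the flux is a
cubic average of increments. Expanding the cube, all terms vanish by the divergence condition or
because `∇K` has zero mean, except the two mixed ones, which agree because `∇K` is odd. -/
lemma flux_eq_increments {K : V3 → ℝ} (hK : PerKernel K) {u : V3 → V3} (hu : DivFreeField u) :
    ∫ x in cube, ∫ y in cube,
        (∑ j, pd K j (y - x) * (u y j - u x j)) * ∑ i, (u y i - u x i) ^ 2
      = 4 * flux K u u := by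
  have hk := hK.continuous_pd
  have hc := hu.cont
  have c1 : Continuous (fun p : V3 × V3 =>
    (∑ j, pd K j (p.2 - p.1) * u p.2 j) * ∑ i, (u p.2 i) ^ 2) := by fun_prop
  have c2 : Continuous (fun p : V3 × V3 =>
    (∑ j, pd K j (p.2 - p.1) * u p.2 j) * ∑ i, (u p.1 i) ^ 2) := by fun_prop
  have c3 : Continuous (fun p : V3 × V3 =>
    (∑ j, pd K j (p.2 - p.1) * u p.1 j) * ∑ i, (u p.2 i) ^ 2) := by fun_prop
  have c4 : Continuous (fun p : V3 × V3 =>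
    (∑ j, pd K j (p.2 - p.1) * u p.1 j) * ∑ i, (u p.1 i) ^ 2) := by fun_prop
  have c5 : Continuous (fun p : V3 × V3 =>
    (∑ j, pd K j (p.2 - p.1) * u p.2 j) * ∑ i, u p.1 i * u p.2 i) := by fun_prop
  have c6 : Continuous (fun p : V3 × V3 =>
    (∑ j, pd K j (p.2 - p.1) * u p.1 j) * ∑ i, u p.1 i * u p.2 i) := by fun_prop
  have i1 : ∫ p in cube ×ˢ cube,
      (∑ j, pd K j (p.2 - p.1) * u p.2 j) * ∑ i, (u p.2 i) ^ 2 = 0 := by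
    rw [setIntegral_cube_prod_symm c1]
    simp only [integral_mul_const, integral_pd_mul_const' hK, zero_mul, integral_zero]
  have i2 : ∫ p in cube ×ˢ cube,
      (∑ j, pd K j (p.2 - p.1) * u p.2 j) * ∑ i, (u p.1 i) ^ 2 = 0 := by
    rw [setIntegral_cube_prod c2]
    simp only [integral_mul_const, hu.pd_right hK, zero_mul, integral_zero]
  have i3 : ∫ p in cube ×ˢ cube,
      (∑ j, pd K j (p.2 - p.1) * u p.1 j) * ∑ i, (u p.2 i) ^ 2 = 0 := by
    rw [setIntegral_cube_prod_symm c3]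
    simp only [integral_mul_const, hu.pd_left hK, zero_mul, integral_zero]
  have i4 : ∫ p in cube ×ˢ cube,
      (∑ j, pd K j (p.2 - p.1) * u p.1 j) * ∑ i, (u p.1 i) ^ 2 = 0 := by
    rw [setIntegral_cube_prod c4]
    simp only [integral_mul_const, integral_pd_mul_const hK, zero_mul, integral_zero]
  have i6 : ∫ p in cube ×ˢ cube,
      (∑ j, pd K j (p.2 - p.1) * u p.1 j) * ∑ i, u p.1 i * u p.2 i = flux K u u :=
    setIntegral_cube_prod c6
  have i5 : ∫ p in cube ×ˢ cube,
      (∑ j, pd K j (p.2 - p.1) * u p.2 j) * ∑ i, u p.1 i * u p.2 i = -flux K u u := by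
    rw [setIntegral_cube_prod_symm c5, flux, ← integral_neg]
    refine integral_congr_ae (Filter.Eventually.of_forall fun y => ?_)
    simp only
    rw [← integral_neg]
    refine integral_congr_ae (Filter.Eventually.of_forall fun x => ?_)
    simp only [hK.pd_sub_comm _ y x, Fin.sum_univ_three]
    ring
  have e : ∀ p : V3 × V3,
      (∑ j, pd K j (p.2 - p.1) * (u p.2 j - u p.1 j)) * ∑ i, (u p.2 i - u p.1 i) ^ 2
      = (((∑ j, pd K j (p.2 - p.1) * u p.2 j) * ∑ i, (u p.2 i) ^ 2
        + (∑ j, pd K j (p.2 - p.1) * u p.2 j) * ∑ i, (u p.1 i) ^ 2)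
        - ((∑ j, pd K j (p.2 - p.1) * u p.1 j) * ∑ i, (u p.2 i) ^ 2
        + (∑ j, pd K j (p.2 - p.1) * u p.1 j) * ∑ i, (u p.1 i) ^ 2))
        + (2 * ((∑ j, pd K j (p.2 - p.1) * u p.1 j) * ∑ i, u p.1 i * u p.2 i)
          - 2 * ((∑ j, pd K j (p.2 - p.1) * u p.2 j) * ∑ i, u p.1 i * u p.2 i)) := by
    intro p
    simp only [Fin.sum_univ_three]
    ring
  have h0 := setIntegral_cube_prod (F := fun p : V3 × V3 =>
    (∑ j, pd K j (p.2 - p.1) * (u p.2 j - u p.1 j)) * ∑ i, (u p.2 i - u p.1 i) ^ 2) (by fun_prop)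
  rw [← h0]
  simp only [e]
  have I := fun {F : V3 × V3 → ℝ} (h : Continuous F) => integrableOn_cube_prod h
  rw [integral_add, integral_sub, integral_add, integral_add, integral_sub,
    integral_const_mul, integral_const_mul, i1, i2, i3, i4, i5, i6]
  · ring
  · exact (I c6).const_mul 2
  · exact (I c5).const_mul 2
  · exact I c3
  · exact I c4
  · exact I c1
  · exact I c2
  · exact I (c1.add c2)
  · exact I (c3.add c4)
  · exact (I (c1.add c2)).sub (I (c3.add c4))
  · exact ((I c6).const_mul 2).sub ((I c5).const_mul 2)

/-! ### Weak derivatives in time -/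

/-- The du Bois-Reymond lemma: a continuous function with a continuous weak derivative on `(0,T)`
is differentiable there. The two functions are mollified in time, where the identity is classical,
and the mean value inequality passes to the limit. -/
lemma hasDerivAt_of_weak {T : ℝ} {f g : ℝ → ℝ} (hf : Continuous f) (hg : Continuous g)
    (h : ∀ η : ℝ → ℝ, ContDiff ℝ ∞ η →
      (∃ S : Set ℝ, IsCompact S ∧ S ⊆ Set.Ioo 0 T ∧ ∀ t ∉ S, η t = 0) →
      ∫ t in Set.Ioo (0:ℝ) T, (f t * deriv η t + g t * η t) = 0)
    {t₀ : ℝ} (ht₀ : t₀ ∈ Set.Ioo 0 T) : HasDerivAt f (g t₀) t₀ := by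
  rw [hasDerivAt_iff_isLittleO, Asymptotics.isLittleO_iff]
  intro c hc
  obtain ⟨δ, hδ, hδ0, hδT, hδg⟩ : ∃ δ > 0, δ ≤ t₀ ∧ δ ≤ T - t₀ ∧
      ∀ s, dist s t₀ < δ → dist (g s) (g t₀) ≤ c := by
    obtain ⟨δ, hδ, h1⟩ := Metric.continuousAt_iff.1 hg.continuousAt c hc
    refine ⟨min δ (min t₀ (T - t₀)), lt_min hδ (lt_min ht₀.1 (by linarith [ht₀.2])),
      (min_le_right _ _).trans (min_le_left _ _), (min_le_right _ _).trans (min_le_right _ _),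
      fun s hs => (h1 (hs.trans_le (min_le_left _ _))).le⟩
  have hpos : ∀ n : ℕ, 0 < δ / (4 * (n + 1)) := fun n => by positivity
  let φ : ℕ → ContDiffBump (0 : ℝ) := fun n =>
    ⟨δ / (4 * (n + 1)), 2 * (δ / (4 * (n + 1))), hpos n, by linarith [hpos n]⟩
  have hrle : ∀ n, (φ n).rOut ≤ δ / 2 := by
    intro n
    have h1 : δ / (4 * ((n : ℝ) + 1)) ≤ δ / 4 :=
      div_le_div_of_nonneg_left hδ.le (by norm_num) (by linarith [(Nat.cast_nonneg n : (0:ℝ) ≤ n)])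
    change 2 * (δ / (4 * ((n : ℝ) + 1))) ≤ δ / 2
    linarith
  have hrlim : Filter.Tendsto (fun n => (φ n).rOut) Filter.atTop (𝓝 0) := by
    have h1 : Filter.Tendsto (fun n : ℕ => 1 / ((n : ℝ) + 1)) Filter.atTop (𝓝 0) :=
      tendsto_one_div_add_atTop_nhds_zero_nat
    have h2 := h1.const_mul (δ / 2)
    rw [mul_zero] at h2
    refine h2.congr fun n => ?_
    change _ = 2 * (δ / (4 * ((n : ℝ) + 1)))
    field_simp
    norm_num
  let F : ℕ → ℝ → ℝ := fun n =>
    convolution ((φ n).normed volume) f (ContinuousLinearMap.lsmul ℝ ℝ) volume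
  let G : ℕ → ℝ → ℝ := fun n =>
    convolution ((φ n).normed volume) g (ContinuousLinearMap.lsmul ℝ ℝ) volume
  have hFderiv : ∀ n, ∀ x ∈ Metric.ball t₀ (δ / 2), HasDerivAt (F n) (G n x) x := by
    intro n x hx
    set ρ := (φ n).normed (volume : Measure ℝ) with hρ
    have hρs : ContDiff ℝ ∞ ρ := (φ n).contDiff_normed
    have h1 : HasDerivAt (F n) (convolution (deriv ρ) f (ContinuousLinearMap.lsmul ℝ ℝ) volume x) x :=
      (φ n).hasCompactSupport_normed.hasDerivAt_convolution_left _ (hρs.of_le (by simp))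
        hf.locallyIntegrable x
    convert h1 using 1
    have hsupp : ∀ t ∉ Metric.closedBall x (φ n).rOut, ρ (x - t) = 0 := by
      intro t ht
      by_contra hne
      have hmem : x - t ∈ Function.support ρ := hne
      rw [hρ, (φ n).support_normed_eq, Metric.mem_ball, dist_zero_right, Real.norm_eq_abs] at hmem
      exact ht (by rw [Metric.mem_closedBall, dist_comm, Real.dist_eq]; exact hmem.le)
    have hsub : Metric.closedBall x (φ n).rOut ⊆ Set.Ioo 0 T := by
      intro t ht
      have e1 : |t - x| ≤ δ / 2 := (Real.dist_eq t x ▸ Metric.mem_closedBall.1 ht).trans (hrle n)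
      have e2 : |x - t₀| < δ / 2 := Real.dist_eq x t₀ ▸ Metric.mem_ball.1 hx
      rw [abs_le] at e1
      rw [abs_lt] at e2
      constructor <;> linarith
    have hη : ContDiff ℝ ∞ (fun t => ρ (x - t)) := hρs.comp (contDiff_const.sub contDiff_id)
    have hdη : ∀ t, deriv (fun t => ρ (x - t)) t = -deriv ρ (x - t) := fun t =>
      deriv_comp_const_sub ρ x t
    have hw := h (fun t => ρ (x - t)) hη
      ⟨_, isCompact_closedBall x (φ n).rOut, hsub, hsupp⟩
    have hdsupp : ∀ t ∉ Metric.closedBall x (φ n).rOut, deriv ρ (x - t) = 0 := by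
      intro t ht
      have hev : (fun t => ρ (x - t)) =ᶠ[𝓝 t] fun _ => 0 := by
        filter_upwards [Metric.isClosed_closedBall.isOpen_compl.mem_nhds ht] with s hs
        exact hsupp s hs
      have := hev.deriv_eq
      rw [hdη] at this
      simpa using this
    rw [setIntegral_eq_integral_of_forall_compl_eq_zero] at hw
    · have hcρ : Continuous ρ := hρs.continuous
      have hcρ' : Continuous (deriv ρ) := hρs.continuous_deriv (by simp)
      have hcs : ∀ {q : ℝ → ℝ}, (∀ t ∉ Metric.closedBall x (φ n).rOut, q t = 0) →
          HasCompactSupport q := fun hq => HasCompactSupport.intro (isCompact_closedBall x _) hq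
      have I1 : Integrable (fun t => deriv ρ (x - t) * f t) :=
        Continuous.integrable_of_hasCompactSupport (by fun_prop)
          (hcs fun t ht => by rw [hdsupp t ht, zero_mul])
      have I2 : Integrable (fun t => ρ (x - t) * g t) :=
        Continuous.integrable_of_hasCompactSupport (by fun_prop)
          (hcs fun t ht => by rw [hsupp t ht, zero_mul])
      change convolution ρ g _ _ x = _
      rw [convolution_eq_swap, convolution_eq_swap]
      simp only [ContinuousLinearMap.lsmul_apply, smul_eq_mul]
      have hw2 : ∫ t, (ρ (x - t) * g t - deriv ρ (x - t) * f t) = 0 := by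
        rw [← hw]
        refine integral_congr_ae (Filter.Eventually.of_forall fun t => ?_)
        simp only [hdη]
        ring
      rw [integral_sub I2 I1] at hw2
      linarith
    · intro t ht
      have ht' : t ∉ Metric.closedBall x (φ n).rOut := fun h' => ht (hsub h')
      rw [hdη, hdsupp t ht', hsupp t ht']
      ring
  have hGbound : ∀ n, ∀ x ∈ Metric.ball t₀ (δ / 2), ‖G n x - g t₀‖ ≤ c := by
    intro n x hx
    rw [← dist_eq_norm]
    refine dist_convolution_le hc.le (φ n).support_normed_eq.subset (φ n).nonneg_normed
      (φ n).integral_normed hg.aestronglyMeasurable fun y hy => hδg y ?_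
    have e1 := (Metric.mem_ball.1 hy).trans_le (hrle n)
    have e2 := Metric.mem_ball.1 hx
    linarith [dist_triangle y x t₀]
  have hFlim : ∀ x, Filter.Tendsto (fun n => F n x) Filter.atTop (𝓝 (f x)) := fun x =>
    ContDiffBump.convolution_tendsto_right_of_continuous hrlim hf x
  filter_upwards [Metric.ball_mem_nhds t₀ (half_pos hδ)] with x hx
  have hn : ∀ n, ‖F n x - F n t₀ - (x - t₀) • g t₀‖ ≤ c * ‖x - t₀‖ := by
    intro n
    have := (convex_ball t₀ (δ / 2)).norm_image_sub_le_of_norm_hasDerivWithin_le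
      (f := fun y => F n y - y * g t₀) (f' := fun y => G n y - 1 * g t₀) (C := c)
      (fun y hy => ((hFderiv n y hy).sub ((hasDerivAt_id y).mul_const _)).hasDerivWithinAt)
      (fun y hy => by simpa using hGbound n y hy) (Metric.mem_ball_self (half_pos hδ)) hx
    refine le_of_eq_of_le ?_ this
    congr 1
    simp only [smul_eq_mul]
    ring
  exact le_of_tendsto ((((hFlim x).sub (hFlim t₀)).sub_const _).norm)
    (Filter.Eventually.of_forall hn)

/-! ### Evolution of the regularized energy -/

/-- A weak Euler flow on `(0,T)` that is defined and continuous for all times `t : ℝ`, such as the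
extension of a weak solution on `[0,T]` that is constant in time outside `[0,T]`. -/
structure GlobalFlow (T : ℝ) (u : ℝ → V3 → V3) : Prop where
  cont : Continuous (fun p : ℝ × V3 => u p.1 p.2)
  field : ∀ t, DivFreeField (u t)
  weak : ∀ φ : ℝ → V3 → V3, SmoothST φ → (∀ t, Per (φ t)) →
    (∃ K : Set ℝ, IsCompact K ∧ K ⊆ Set.Ioo 0 T ∧ ∀ t ∉ K, ∀ x, φ t x = 0) →
    (∀ t x, divg (φ t) x = 0) →
    ∫ t in Set.Ioo (0:ℝ) T, ∫ x in cube,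
      ((∑ i, u t x i * deriv (fun s => φ s x i) t)
        + ∑ i, ∑ j, u t x i * u t x j * pd (fun y => φ t y i) j x) = 0

lemma GlobalFlow.comp_cont {T : ℝ} {u : ℝ → V3 → V3} (hu : GlobalFlow T u) {X : Type*}
    [TopologicalSpace X] {f : X → ℝ} {g : X → V3} (hf : Continuous f) (hg : Continuous g) :
    Continuous (fun x => u (f x) (g x)) :=
  hu.cont.comp (hf.prodMk hg)

lemma GlobalFlow.continuous_corr {T : ℝ} {u : ℝ → V3 → V3} (hu : GlobalFlow T u) {K : V3 → ℝ}
    (hK : PerKernel K) : Continuous (fun p : ℝ × ℝ => corr K (u p.1) (u p.2)) := by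
  have hK0 := hK.smooth.continuous
  refine continuous_cube_integral ?_
  refine continuous_cube_integral (X := (ℝ × ℝ) × V3)
    (f := fun q y => K (y - q.2) * ∑ i, u q.1.1 q.2 i * u q.1.2 y i) ?_
  simp only [Function.uncurry_def]
  have h1 : ∀ i, Continuous (fun q : ((ℝ × ℝ) × V3) × V3 => u q.1.1.1 q.1.2 i) := fun i =>
    (continuous_apply i).comp (hu.comp_cont (by fun_prop) (by fun_prop))
  have h2 : ∀ i, Continuous (fun q : ((ℝ × ℝ) × V3) × V3 => u q.1.1.2 q.2 i) := fun i =>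
    (continuous_apply i).comp (hu.comp_cont (by fun_prop) (by fun_prop))
  refine Continuous.mul (by fun_prop)
    (continuous_finsetSum _ fun i _ => (h1 i).mul (h2 i))

lemma GlobalFlow.continuous_flux {T : ℝ} {u : ℝ → V3 → V3} (hu : GlobalFlow T u) {K : V3 → ℝ}
    (hK : PerKernel K) : Continuous (fun p : ℝ × ℝ => flux K (u p.1) (u p.2)) := by
  have hk := hK.continuous_pd
  refine continuous_cube_integral ?_
  refine continuous_cube_integral (X := (ℝ × ℝ) × V3)
    (f := fun q y => (∑ j, pd K j (y - q.2) * u q.1.1 q.2 j) *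
      ∑ i, u q.1.1 q.2 i * u q.1.2 y i) ?_
  simp only [Function.uncurry_def]
  have h1 : ∀ i, Continuous (fun q : ((ℝ × ℝ) × V3) × V3 => u q.1.1.1 q.1.2 i) := fun i =>
    (continuous_apply i).comp (hu.comp_cont (by fun_prop) (by fun_prop))
  have h2 : ∀ i, Continuous (fun q : ((ℝ × ℝ) × V3) × V3 => u q.1.1.2 q.2 i) := fun i =>
    (continuous_apply i).comp (hu.comp_cont (by fun_prop) (by fun_prop))
  refine Continuous.mul (continuous_finsetSum _ fun j _ => Continuous.mul (by fun_prop) (h1 j))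
    (continuous_finsetSum _ fun i _ => (h1 i).mul (h2 i))

/-- The regularized field `K ∗ b`. -/
def smoothed (K : V3 → ℝ) (b : V3 → V3) (x : V3) : V3 :=
  fun i => ∫ y in cube, b y i • K (y - x)

section smoothed
variable {K : V3 → ℝ} {b : V3 → V3}

lemma contDiff_smoothed (hK : PerKernel K) (hb : Continuous b) : ContDiff ℝ ∞ (smoothed K b) :=
  contDiff_pi.2 fun i => contDiff_cube_conv hK.smooth (b := fun y => b y i) (by fun_prop)

lemma pd_smoothed (hK : PerKernel K) (hb : Continuous b) (i j : Fin 3) (x : V3) :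
    pd (fun y => smoothed K b y i) j x = -∫ y in cube, b y i * pd K j (y - x) :=
  pd_cube_conv hK.smooth (b := fun y => b y i) (by fun_prop) j x

lemma per_smoothed (hK : PerKernel K) : Per (smoothed K b) := by
  intro x n
  funext i
  simp only [smoothed]
  congr 1
  funext y
  exact congrArg (fun z => b y i • z) (hK.per_sub_left y x n)

lemma divg_smoothed (hK : PerKernel K) (hb : DivFreeField b) (x : V3) :
    divg (smoothed K b) x = 0 := by
  have hc := hb.cont
  have hk := hK.continuous_pd
  simp only [divg, pd_smoothed hK hc, Finset.sum_neg_distrib, neg_eq_zero]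
  rw [← integral_finsetSum]
  · simpa only [mul_comm] using hb.pd_right hK x
  · intro i _
    exact integrableOn_cube (f := fun y => b y i * pd K i (y - x)) (by fun_prop)

lemma integral_mul_smoothed (hK : PerKernel K) {a : V3 → V3} (hb : Continuous b) :
    ∫ x in cube, ∑ i, a x i * smoothed K b x i = corr K a b := by
  have hK0 := hK.smooth.continuous
  refine integral_congr_ae (Filter.Eventually.of_forall fun x => ?_)
  simp only [smoothed]
  simp_rw [← integral_const_mul]
  rw [← integral_finsetSum]
  · refine integral_congr_ae (Filter.Eventually.of_forall fun y => ?_)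
    simp only [smul_eq_mul, Finset.mul_sum]
    exact Finset.sum_congr rfl fun i _ => by ring
  · intro i _
    exact integrableOn_cube (f := fun y => a x i * (b y i • K (y - x))) (by fun_prop)

lemma integral_mul_pd_smoothed (hK : PerKernel K) {a : V3 → V3} (hb : Continuous b) :
    ∫ x in cube, ∑ i, ∑ j, a x i * a x j * pd (fun y => smoothed K b y i) j x
      = -flux K a b := by
  have hk := hK.continuous_pd
  rw [flux, ← integral_neg]
  refine integral_congr_ae (Filter.Eventually.of_forall fun x => ?_)
  simp only [pd_smoothed hK hb]
  simp_rw [mul_neg, ← integral_const_mul, Finset.sum_neg_distrib]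
  have hI : ∀ i j : Fin 3, IntegrableOn
      (fun y => a x i * a x j * (b y i * pd K j (y - x))) cube := fun i j =>
    integrableOn_cube (by fun_prop)
  simp_rw [← integral_finsetSum Finset.univ fun j _ => hI _ j]
  rw [← integral_finsetSum Finset.univ fun i _ => integrable_finsetSum _ fun j _ => hI i j]
  congr 1
  refine integral_congr_ae (Filter.Eventually.of_forall fun y => ?_)
  simp only [Fin.sum_univ_three]
  ring

end smoothed

/-- Testing the Euler equations with `η(t) (K ∗ b)(x)` computes the time derivative of the
correlation of the flow with a fixed divergence-free field. -/
lemma GlobalFlow.hasDerivAt_corr {T : ℝ} {u : ℝ → V3 → V3} (hu : GlobalFlow T u) {K : V3 → ℝ}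
    (hK : PerKernel K) (s : ℝ) {t : ℝ} (ht : t ∈ Set.Ioo 0 T) :
    HasDerivAt (fun r => corr K (u r) (u s)) (-flux K (u t) (u s)) t := by
  have hb := hu.field s
  have hsm := contDiff_smoothed hK hb.cont
  refine hasDerivAt_of_weak (f := fun r => corr K (u r) (u s)) (g := fun r => -flux K (u r) (u s))
    ((hu.continuous_corr hK).comp (continuous_id.prodMk continuous_const))
    ((hu.continuous_flux hK).comp (continuous_id.prodMk continuous_const)).neg ?_ ht
  rintro η hη ⟨S, hS, hST, hS0⟩
  have hw := hu.weak (fun t x => η t • smoothed K (u s) x) ?_ ?_ ⟨S, hS, hST, ?_⟩ ?_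
  · refine Eq.trans ?_ hw
    refine integral_congr_ae (Filter.Eventually.of_forall fun r => ?_)
    simp only
    rw [← integral_mul_smoothed hK hb.cont, ← integral_mul_pd_smoothed hK hb.cont]
    rw [← integral_mul_const, ← integral_mul_const, ← integral_add]
    · refine integral_congr_ae (Filter.Eventually.of_forall fun x => ?_)
      have hd : ∀ i, deriv (fun s_1 => (η s_1 • smoothed K (u s) x) i) r
          = deriv η r * smoothed K (u s) x i := by
        intro i
        simp only [Pi.smul_apply, smul_eq_mul]
        exact deriv_mul_const ((hη.differentiable (by simp)) r) _
      have hp : ∀ i j, pd (fun y => (η r • smoothed K (u s) y) i) j x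
          = η r * pd (fun y => smoothed K (u s) y i) j x := by
        intro i j
        simp only [Pi.smul_apply, smul_eq_mul, pd]
        rw [fderiv_const_mul]
        · rfl
        · exact ((contDiff_pi.1 hsm i).differentiable (by simp)) x
      simp only [hd, hp, Fin.sum_univ_three]
      ring
    · have h1 := (hu.field r).cont
      have h2 := hsm.continuous
      exact integrableOn_cube (f := fun x => (∑ i, u r x i * smoothed K (u s) x i) * deriv η r)
        (by fun_prop)
    · have h1 := (hu.field r).cont
      have h2 : ∀ i j, Continuous (pd (fun y => smoothed K (u s) y i) j) := fun i j =>
        ((contDiff_pi.1 hsm i).continuous_fderiv (by simp)).clm_apply continuous_const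
      exact integrableOn_cube (f := fun x => (∑ i, ∑ j, u r x i * u r x j *
        pd (fun y => smoothed K (u s) y i) j x) * η r) (by fun_prop)
  · exact (hη.comp contDiff_fst).smul (hsm.comp contDiff_snd)
  · intro t x n
    simp only [per_smoothed hK x n]
  · intro t ht x
    simp only [hS0 t ht, zero_smul]
  · intro t x
    have hp : ∀ i, pd (fun y => (η t • smoothed K (u s) y) i) i x
        = η t * pd (fun y => smoothed K (u s) y i) i x := by
      intro i
      simp only [Pi.smul_apply, smul_eq_mul, pd]
      rw [fderiv_const_mul]
      · rfl
      · exact ((contDiff_pi.1 hsm i).differentiable (by simp)) x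
    simp only [divg, hp, ← Finset.mul_sum]
    have := divg_smoothed hK hb x
    rw [divg] at this
    rw [this, mul_zero]

/-- The evolution of the regularized energy. By symmetry of the correlation in its two arguments,
each argument contributes one flux. -/
lemma GlobalFlow.hasDerivAt_corr_diag {T : ℝ} {u : ℝ → V3 → V3} (hu : GlobalFlow T u) {K : V3 → ℝ}
    (hK : PerKernel K) {t : ℝ} (ht : t ∈ Set.Ioo 0 T) :
    HasDerivAt (fun r => corr K (u r) (u r)) (-(2 * flux K (u t) (u t))) t := by
  rw [hasDerivAt_iff_isLittleO, Asymptotics.isLittleO_iff]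
  intro c hc
  obtain ⟨δ, hδ, hδf⟩ := Metric.continuousAt_iff.1
    ((hu.continuous_flux hK).continuousAt (x := (t, t))) (c / 2) (half_pos hc)
  obtain ⟨δ', hδ', hsub⟩ := Metric.isOpen_iff.1 isOpen_Ioo t ht
  set r := min δ δ' with hr
  have hrpos : 0 < r := lt_min hδ hδ'
  filter_upwards [Metric.ball_mem_nhds t hrpos] with t' ht'
  -- increments in the first argument, the second one being frozen near `t`
  have key : ∀ s ∈ Metric.ball t r,
      ‖(corr K (u t') (u s) + t' * flux K (u t) (u t))
        - (corr K (u t) (u s) + t * flux K (u t) (u t))‖ ≤ c / 2 * ‖t' - t‖ := by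
    intro s hs
    refine (convex_ball t r).norm_image_sub_le_of_norm_hasDerivWithin_le
      (f := fun y => corr K (u y) (u s) + y * flux K (u t) (u t))
      (f' := fun y => -flux K (u y) (u s) + 1 * flux K (u t) (u t))
      (fun y hy => ((hu.hasDerivAt_corr hK s
        (hsub (Metric.ball_subset_ball (min_le_right _ _) hy))).add
        ((hasDerivAt_id y).mul_const _)).hasDerivWithinAt) (fun y hy => ?_)
      (Metric.mem_ball_self hrpos) ht'
    have h1 : dist (y, s) (t, t) < δ := by
      rw [Prod.dist_eq]
      exact max_lt ((Metric.mem_ball.1 hy).trans_le (min_le_left _ _))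
        ((Metric.mem_ball.1 hs).trans_le (min_le_left _ _))
    have h2 := (hδf h1).le
    rw [dist_comm, dist_eq_norm] at h2
    have h3 : -flux K (u y) (u s) + 1 * flux K (u t) (u t)
        = flux K (u t) (u t) - flux K (u y) (u s) := by ring
    rw [h3]
    exact h2
  have k1 := key t' ht'
  have k2 := key t (Metric.mem_ball_self hrpos)
  have hcomm : corr K (u t) (u t') = corr K (u t') (u t) :=
    corr_comm hK (hu.field t).cont (hu.field t').cont
  rw [hcomm] at k1
  have e : corr K (u t') (u t') - corr K (u t) (u t) - (t' - t) • -(2 * flux K (u t) (u t))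
      = ((corr K (u t') (u t') + t' * flux K (u t) (u t))
        - (corr K (u t') (u t) + t * flux K (u t) (u t)))
        + ((corr K (u t') (u t) + t' * flux K (u t) (u t))
        - (corr K (u t) (u t) + t * flux K (u t) (u t))) := by
    simp only [smul_eq_mul]
    ring
  rw [e]
  refine (norm_add_le _ _).trans ?_
  linarith

/-! ### Periodic kernels at small scales -/

/-- The smooth periodic function `∑ sin²(π zᵢ)`, comparable to the squared distance from `z` to
the lattice `ℤ³`. -/
def latDist (z : V3) : ℝ := ∑ i, sin (π * z i) ^ 2

/-- A periodic bump function at scale `ℓ`, concentrated near `ℤ³`. -/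
def ker (ℓ : ℝ) (z : V3) : ℝ := smoothTransition (2 - 2 * latDist z / ℓ ^ 2)

lemma latDist_nonneg (z : V3) : 0 ≤ latDist z := Finset.sum_nonneg fun _ _ => sq_nonneg _

lemma contDiff_latDist : ContDiff ℝ ∞ latDist := by
  unfold latDist
  fun_prop

lemma perKernel_ker (ℓ : ℝ) : PerKernel (ker ℓ) where
  smooth := by
    have := contDiff_latDist
    refine smoothTransition.contDiff.comp ?_
    fun_prop
  per := by
    intro z n
    have h : latDist (z + fun i => (n i : ℝ)) = latDist z := by
      refine Finset.sum_congr rfl fun i _ => ?_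
      rw [sin_sq_eq_half_sub, sin_sq_eq_half_sub]
      congr 2
      have := Real.cos_add_int_mul_two_pi (2 * (π * z i)) (n i)
      rw [← this]
      congr 1
      simp only [Pi.add_apply]
      ring
    simp only [ker, h]
  even := by
    intro z
    simp [ker, latDist]

/-- By Jordan's inequality, `|sin(π x)|` is at least twice the distance from `x` to `ℤ`. -/
lemma exists_int_near {x ℓ : ℝ} (hℓ : 0 ≤ ℓ) (h : sin (π * x) ^ 2 ≤ ℓ ^ 2) :
    ∃ n : ℤ, |x - n| ≤ ℓ / 2 := by
  refine ⟨round x, ?_⟩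
  have h1 : |x - round x| ≤ 1 / 2 := abs_sub_round x
  have hpi := Real.pi_pos
  have h2 : |π * (x - round x)| ≤ π / 2 := by
    rw [abs_mul, abs_of_pos hpi]
    nlinarith
  have h3 := Real.mul_abs_le_abs_sin h2
  have h4 : sin (π * (x - round x)) ^ 2 = sin (π * x) ^ 2 := by
    rw [sin_sq_eq_half_sub, sin_sq_eq_half_sub]
    congr 2
    have := Real.cos_sub_int_mul_two_pi (2 * (π * x)) (round x)
    rw [← this]
    congr 1
    ring
  have h5 : |sin (π * (x - round x))| ≤ ℓ := by
    refine abs_le_of_sq_le_sq ?_ hℓ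
    rw [h4]; exact h
  rw [abs_mul, abs_of_pos hpi] at h3
  have h6 : 2 / π * (π * |x - round x|) = 2 * |x - round x| := by field_simp
  rw [h6] at h3
  linarith

lemma near_of_latDist {ℓ : ℝ} (hℓ : 0 < ℓ) {z : V3} (h : latDist z ≤ ℓ ^ 2) :
    ∃ n : Fin 3 → ℤ, ∀ i, |z i - n i| ≤ ℓ / 2 := by
  have : ∀ i, ∃ n : ℤ, |z i - n| ≤ ℓ / 2 := fun i =>
    exists_int_near hℓ.le ((Finset.single_le_sum (f := fun i => sin (π * z i) ^ 2)
      (fun _ _ => sq_nonneg _) (Finset.mem_univ i)).trans h)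
  choose n hn using this
  exact ⟨n, hn⟩

lemma latDist_le_of_arg_pos {ℓ : ℝ} (hℓ : 0 < ℓ) {z : V3}
    (h : ¬ (2 - 2 * latDist z / ℓ ^ 2 ≤ 0)) : latDist z ≤ ℓ ^ 2 := by
  by_contra hc
  apply h
  have h2 : 0 < ℓ ^ 2 := by positivity
  rw [sub_nonpos, le_div_iff₀ h2]
  linarith

/-- At every `s ≤ 0`, including `s = 0`, the nonnegative function `smoothTransition` attains its
minimum. -/
lemma deriv_smoothTransition_of_nonpos {s : ℝ} (hs : s ≤ 0) : deriv smoothTransition s = 0 := by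
  refine IsLocalMin.deriv_eq_zero (Filter.Eventually.of_forall fun y => ?_)
  rw [smoothTransition.zero_of_nonpos hs]
  exact smoothTransition.nonneg y

lemma exists_deriv_smoothTransition_le :
    ∃ M > 0, ∀ s ≤ 2, |deriv smoothTransition s| ≤ M := by
  have hc : Continuous (deriv smoothTransition) :=
    (smoothTransition.contDiff (n := 1)).continuous_deriv (by simp)
  obtain ⟨M, hM⟩ := (isCompact_Icc (a := (0:ℝ)) (b := 2)).exists_bound_of_continuousOn
    hc.continuousOn
  refine ⟨|M| + 1, by positivity, fun s hs => ?_⟩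
  rcases le_or_gt s 0 with h | h
  · rw [deriv_smoothTransition_of_nonpos h, abs_zero]
    positivity
  · have := hM s ⟨h.le, hs⟩
    rw [Real.norm_eq_abs] at this
    linarith [le_abs_self M]

lemma fderiv_latDist_single (z : V3) (j : Fin 3) :
    fderiv ℝ latDist z (Pi.single j 1) = 2 * π * sin (π * z j) * cos (π * z j) := by
  have h : HasFDerivAt latDist (∑ i, (2 * sin (π * z i) * (cos (π * z i) * π)) •
      (ContinuousLinearMap.proj (R := ℝ) (φ := fun _ : Fin 3 => ℝ) i)) z := by
    unfold latDist
    refine HasFDerivAt.fun_sum fun i _ => ?_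
    have h1 : HasDerivAt (fun x : ℝ => sin (π * x) ^ 2)
        (2 * sin (π * z i) * (cos (π * z i) * π)) (z i) := by
      have h0 : HasDerivAt (fun x : ℝ => π * x) π (z i) := by
        simpa using (hasDerivAt_id (z i)).const_mul π
      simpa using h0.sin.fun_pow 2
    have h2 : HasFDerivAt (fun w : V3 => w i)
      (ContinuousLinearMap.proj (R := ℝ) (φ := fun _ : Fin 3 => ℝ) i) z := hasFDerivAt_apply i z
    exact HasDerivAt.comp_hasFDerivAt (h₂ := fun x : ℝ => sin (π * x) ^ 2) z h1 h2
  rw [h.fderiv]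
  simp only [sum_apply, smul_apply,
    ContinuousLinearMap.proj_apply, smul_eq_mul]
  rw [Finset.sum_eq_single j]
  · simp; ring
  · intro b _ hb
    simp [hb]
  · simp

lemma pd_ker (ℓ : ℝ) (j : Fin 3) (z : V3) :
    pd (ker ℓ) j z = deriv smoothTransition (2 - 2 * latDist z / ℓ ^ 2) *
      (-(2 / ℓ ^ 2) * (2 * π * sin (π * z j) * cos (π * z j))) := by
  have hd : DifferentiableAt ℝ latDist z := contDiff_latDist.differentiable (by simp) z
  have h1 : HasFDerivAt (fun z => 2 - 2 * latDist z / ℓ ^ 2)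
      (-(2 / ℓ ^ 2) • fderiv ℝ latDist z) z := by
    have := (hd.hasFDerivAt.const_mul (-(2 / ℓ ^ 2))).const_add 2
    refine this.congr_of_eventuallyEq (Filter.Eventually.of_forall fun w => ?_)
    change 2 - 2 * latDist w / ℓ ^ 2 = 2 + -(2 / ℓ ^ 2) * latDist w
    ring
  have h2 := ((smoothTransition.contDiff (n := 1)).differentiable (by simp)
    (2 - 2 * latDist z / ℓ ^ 2)).hasDerivAt.comp_hasFDerivAt z h1
  have h3 : fderiv ℝ (ker ℓ) z = _ := h2.fderiv
  rw [pd, h3]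
  simp only [smul_apply, fderiv_latDist_single, smul_eq_mul]

lemma ker_nonneg (ℓ : ℝ) (z : V3) : 0 ≤ ker ℓ z := smoothTransition.nonneg _

lemma ker_near {ℓ : ℝ} (hℓ : 0 < ℓ) {z : V3} (h : ker ℓ z ≠ 0) : latDist z ≤ ℓ ^ 2 :=
  latDist_le_of_arg_pos hℓ fun hs => h (smoothTransition.zero_of_nonpos hs)

lemma pd_ker_near {ℓ : ℝ} (hℓ : 0 < ℓ) {j : Fin 3} {z : V3} (h : pd (ker ℓ) j z ≠ 0) :
    latDist z ≤ ℓ ^ 2 :=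
  latDist_le_of_arg_pos hℓ fun hs => h (by
    rw [pd_ker, deriv_smoothTransition_of_nonpos hs, zero_mul])

lemma abs_pd_ker_le {M ℓ : ℝ} (hM : ∀ s ≤ 2, |deriv smoothTransition s| ≤ M) (hℓ : 0 < ℓ)
    (j : Fin 3) (z : V3) : |pd (ker ℓ) j z| ≤ 4 * π * M / ℓ := by
  have hpi := Real.pi_pos
  have hM0 : 0 ≤ M := (abs_nonneg _).trans (hM 0 (by norm_num))
  by_cases h : pd (ker ℓ) j z = 0
  · rw [h, abs_zero]
    positivity
  have h1 := pd_ker_near hℓ h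
  have h2 : |sin (π * z j)| ≤ ℓ := by
    refine abs_le_of_sq_le_sq ?_ hℓ.le
    exact (Finset.single_le_sum (f := fun i => sin (π * z i) ^ 2)
      (fun _ _ => sq_nonneg _) (Finset.mem_univ j)).trans h1
  have h3 := hM (2 - 2 * latDist z / ℓ ^ 2) (by
    have := latDist_nonneg z
    have : 0 ≤ 2 * latDist z / ℓ ^ 2 := by positivity
    linarith)
  rw [pd_ker, abs_mul, abs_mul, abs_mul, abs_mul, abs_neg, abs_of_pos (show 0 < 2 / ℓ ^ 2 by
    positivity), abs_of_pos (show 0 < 2 * π by positivity)]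
  have h4 := Real.abs_cos_le_one (π * z j)
  calc _ ≤ M * (2 / ℓ ^ 2 * (2 * π * ℓ * 1)) := by gcongr
    _ = 4 * π * M / ℓ := by field_simp; ring

/-- The kernel equals `1` on a box of side `ℓ / 10`. -/
lemma integral_ker_ge {ℓ : ℝ} (hℓ : 0 < ℓ) (hℓ1 : ℓ ≤ 1) :
    ℓ ^ 3 / 1000 ≤ ∫ z in cube, ker ℓ z := by
  set A : Set V3 := Set.Icc 0 (fun _ => ℓ / 10) with hA
  have hAc : A ⊆ cube := by
    rw [cube_eq_Icc]
    refine Set.Icc_subset_Icc le_rfl fun i => ?_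
    simp only [Pi.one_apply]
    linarith
  have hK := (perKernel_ker ℓ).smooth.continuous
  have h1 : ∀ z ∈ A, ker ℓ z = 1 := by
    intro z hz
    refine smoothTransition.one_of_one_le ?_
    have h2 : latDist z ≤ ∑ _i : Fin 3, ℓ ^ 2 / 8 := by
      refine Finset.sum_le_sum fun i _ => ?_
      have hz0 : 0 ≤ z i := hz.1 i
      have hz1 : z i ≤ ℓ / 10 := hz.2 i
      have h3 : |sin (π * z i)| ≤ |π * z i| := Real.abs_sin_le_abs
      have h4 : |π * z i| ≤ 3.15 * (ℓ / 10) := by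
        rw [abs_of_nonneg (by positivity)]
        have := Real.pi_lt_d2
        gcongr
      rw [← sq_abs]
      nlinarith [abs_nonneg (sin (π * z i))]
    have h5 : 2 * latDist z / ℓ ^ 2 ≤ 1 := by
      rw [div_le_one (by positivity)]
      simp only [Finset.sum_const, Finset.card_univ, Fintype.card_fin, nsmul_eq_mul,
        Nat.cast_ofNat] at h2
      nlinarith [sq_nonneg ℓ]
    linarith
  have h2 : ∫ z in A, ker ℓ z = volume.real A := by
    rw [setIntegral_congr_fun measurableSet_Icc h1]
    simp [hA]
  have h3 : volume.real A = ℓ ^ 3 / 1000 := by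
    rw [measureReal_def, hA, Real.volume_Icc_pi]
    simp only [Pi.zero_apply, sub_zero, Finset.prod_const, Finset.card_univ, Fintype.card_fin,
      ENNReal.toReal_pow]
    rw [ENNReal.toReal_ofReal (by positivity)]
    ring
  rw [← h3, ← h2]
  exact setIntegral_mono_set (integrableOn_cube hK)
    (Filter.Eventually.of_forall fun z => ker_nonneg ℓ z) hAc.eventuallyLE

/-- Within the cube, the gradient of the kernel lives in the eight corners, of total volume `ℓ³`. -/
lemma integral_abs_pd_ker_le {M ℓ : ℝ} (hM : ∀ s ≤ 2, |deriv smoothTransition s| ≤ M)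
    (hℓ : 0 < ℓ) (hℓ1 : ℓ ≤ 1) (j : Fin 3) :
    ∫ z in cube, |pd (ker ℓ) j z| ≤ 4 * π * M / ℓ * ℓ ^ 3 := by
  have hpi := Real.pi_pos
  have hM0 : 0 ≤ M := (abs_nonneg _).trans (hM 0 (by norm_num))
  set I : Set ℝ := Set.Icc 0 (ℓ / 2) ∪ Set.Icc (1 - ℓ / 2) 1 with hI
  set A : Set V3 := Set.univ.pi fun _ => I with hA
  have hAm : MeasurableSet A :=
    MeasurableSet.univ_pi fun _ => measurableSet_Icc.union measurableSet_Icc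
  have hIv : volume I ≤ ENNReal.ofReal ℓ := by
    refine (measure_union_le _ _).trans ?_
    rw [Real.volume_Icc, Real.volume_Icc, ← ENNReal.ofReal_add (by linarith) (by linarith)]
    exact ENNReal.ofReal_le_ofReal (by linarith)
  have hAv : volume A ≤ ENNReal.ofReal (ℓ ^ 3) := by
    rw [hA, volume_pi_pi, ENNReal.ofReal_pow hℓ.le]
    simp only [Finset.prod_const, Finset.card_univ, Fintype.card_fin]
    gcongr
  have hAr : volume.real A ≤ ℓ ^ 3 := ENNReal.toReal_le_of_le_ofReal (by positivity) hAv
  have hsupp : ∀ z ∈ cube, z ∉ A → pd (ker ℓ) j z = 0 := by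
    intro z hz hzA
    by_contra h
    apply hzA
    obtain ⟨n, hn⟩ := near_of_latDist hℓ (pd_ker_near hℓ h)
    intro i _
    have h1 := abs_le.1 (hn i)
    have h2 := hz i
    have h3 : n i = 0 ∨ n i = 1 := by
      have a : (-1 : ℝ) < n i := by linarith [h2.1]
      have b : (n i : ℝ) < 2 := by linarith [h2.2]
      have a' : (-1 : ℤ) < n i := by exact_mod_cast a
      have b' : n i < (2 : ℤ) := by exact_mod_cast b
      omega
    rcases h3 with h3 | h3
    · left
      rw [h3] at h1
      push_cast at h1
      exact ⟨h2.1, by linarith⟩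
    · right
      rw [h3] at h1
      push_cast at h1
      exact ⟨by linarith, h2.2⟩
  have hk := (perKernel_ker ℓ).continuous_pd j
  have hfin : volume A ≠ ⊤ := (hAv.trans_lt ENNReal.ofReal_lt_top).ne
  calc ∫ z in cube, |pd (ker ℓ) j z|
      ≤ ∫ z in cube, A.indicator (fun _ => 4 * π * M / ℓ) z := by
        refine setIntegral_mono_on (integrableOn_cube hk.abs)
          ((integrable_indicator_iff hAm).2 (integrableOn_const hfin)).integrableOn
          measurableSet_cube ?_
        intro z hz
        by_cases hzA : z ∈ A
        · rw [Set.indicator_of_mem hzA]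
          exact abs_pd_ker_le hM hℓ j z
        · rw [Set.indicator_of_notMem hzA, hsupp z hz hzA, abs_zero]
    _ = volume.real (cube ∩ A) * (4 * π * M / ℓ) := by
        rw [setIntegral_indicator hAm, setIntegral_const, smul_eq_mul]
    _ ≤ ℓ ^ 3 * (4 * π * M / ℓ) := by
        gcongr
        exact (measureReal_mono Set.inter_subset_right hfin).trans hAr
    _ = _ := mul_comm _ _

/-- Periodic kernels at every scale `ℓ ≤ 1`, whose gradient costs a factor `1/ℓ` uniformly
in `ℓ`. -/
lemma exists_kernel : ∃ D > 0, ∀ ℓ : ℝ, 0 < ℓ → ℓ ≤ 1 → ∃ K : V3 → ℝ, PerKernel K ∧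
    (∀ z, 0 ≤ K z) ∧
    (∀ z, K z ≠ 0 → ∃ n : Fin 3 → ℤ, ∀ i, |z i - n i| ≤ ℓ) ∧
    (∀ j z, pd K j z ≠ 0 → ∃ n : Fin 3 → ℤ, ∀ i, |z i - n i| ≤ ℓ) ∧
    0 < ∫ z in cube, K z ∧
    ∀ j, ℓ * ∫ z in cube, |pd K j z| ≤ D * ∫ z in cube, K z := by
  obtain ⟨M, hM0, hM⟩ := exists_deriv_smoothTransition_le
  have hpi := Real.pi_pos
  refine ⟨4000 * π * M, by positivity, fun ℓ hℓ hℓ1 => ⟨ker ℓ, perKernel_ker ℓ, ker_nonneg ℓ,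
    ?_, ?_, ?_, ?_⟩⟩
  · intro z hz
    obtain ⟨n, hn⟩ := near_of_latDist hℓ (ker_near hℓ hz)
    exact ⟨n, fun i => (hn i).trans (by linarith)⟩
  · intro j z hz
    obtain ⟨n, hn⟩ := near_of_latDist hℓ (pd_ker_near hℓ hz)
    exact ⟨n, fun i => (hn i).trans (by linarith)⟩
  · exact lt_of_lt_of_le (by positivity) (integral_ker_ge hℓ hℓ1)
  · intro j
    have h1 := integral_abs_pd_ker_le hM hℓ hℓ1 j
    have h2 := integral_ker_ge hℓ hℓ1
    calc ℓ * ∫ z in cube, |pd (ker ℓ) j z| ≤ ℓ * (4 * π * M / ℓ * ℓ ^ 3) := by gcongr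
      _ = 4000 * π * M * (ℓ ^ 3 / 1000) := by field_simp; ring
      _ ≤ _ := by gcongr

/-! ### The energy increment estimate -/

/-- The oscillation of `w` at scale `ℓ` is at most `A`. Since `w` will be periodic it suffices to
compare points of the unit cube with points of `[-1, 2]³`. -/
def OscLE (w : V3 → V3) (ℓ A : ℝ) : Prop :=
  ∀ x ∈ cube, ∀ y : V3, (∀ i, y i ∈ Set.Icc (-1 : ℝ) 2) → ‖y - x‖ ≤ ℓ → ‖w y - w x‖ ≤ A

section estimates
variable {w : V3 → V3} {ℓ A : ℝ}

/-- Where the kernel does not vanish, `y` is `ℓ`-close to a lattice translate of `x`, so periodicity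
bounds the increment. -/
lemma OscLE.increment (h : OscLE w ℓ A) (hw : Per w) (hℓ : 0 ≤ ℓ) (hℓ1 : ℓ ≤ 1) {x y : V3}
    (hx : x ∈ cube) (hn : ∃ n : Fin 3 → ℤ, ∀ i, |(y - x) i - n i| ≤ ℓ) (i : Fin 3) :
    |w y i - w x i| ≤ A := by
  obtain ⟨n, hn⟩ := hn
  have h1 : w y = w (y - fun i => (n i : ℝ)) := by
    rw [← hw (y - fun i => (n i : ℝ)) n, sub_add_cancel]
  have h2 := h x hx (y - fun i => (n i : ℝ)) (fun i => ?_) ?_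
  · rw [h1]
    exact (norm_le_pi_norm (w (y - fun i => (n i : ℝ)) - w x) i).trans h2
  · have h3 := abs_le.1 (hn i)
    have h4 := hx i
    simp only [Pi.sub_apply] at h3 ⊢
    exact ⟨by linarith [h4.1], by linarith [h4.2]⟩
  · refine (pi_norm_le_iff_of_nonneg hℓ).2 fun i => ?_
    rw [Real.norm_eq_abs]
    have := hn i
    simp only [Pi.sub_apply] at this ⊢
    rwa [sub_right_comm]

lemma OscLE.increment_sq (h : OscLE w ℓ A) (hw : Per w) (hℓ : 0 ≤ ℓ) (hℓ1 : ℓ ≤ 1) {x y : V3}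
    (hx : x ∈ cube) (hn : ∃ n : Fin 3 → ℤ, ∀ i, |(y - x) i - n i| ≤ ℓ) :
    ∑ i, (w y i - w x i) ^ 2 ≤ 3 * A ^ 2 := by
  have h1 : ∀ i, (w y i - w x i) ^ 2 ≤ A ^ 2 := fun i => by
    have := h.increment hw hℓ hℓ1 hx hn i
    rw [← sq_abs]
    gcongr
  rw [Fin.sum_univ_three]
  linarith [h1 0, h1 1, h1 2]

/-- Regularizing at scale `ℓ` changes the energy by at most the squared oscillation at that scale. -/
lemma energy_defect_le {K : V3 → ℝ} (hK : PerKernel K) (hK0 : ∀ z, 0 ≤ K z)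
    (hKn : ∀ z, K z ≠ 0 → ∃ n : Fin 3 → ℤ, ∀ i, |z i - n i| ≤ ℓ)
    (hℓ : 0 ≤ ℓ) (hℓ1 : ℓ ≤ 1) (hw : DivFreeField w) (h : OscLE w ℓ A) :
    |(∫ z in cube, K z) * (∫ x in cube, ∑ i, (w x i) ^ 2) - corr K w w|
      ≤ 3 / 2 * A ^ 2 * ∫ z in cube, K z := by
  have hc := hw.cont
  have hKc := hK.smooth.continuous
  have h0 : 0 ≤ ∫ x in cube, ∫ y in cube, K (y - x) * ∑ i, (w y i - w x i) ^ 2 :=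
    integral_nonneg fun x => integral_nonneg fun y =>
      mul_nonneg (hK0 _) (Finset.sum_nonneg fun _ _ => sq_nonneg _)
  have h1 : ∫ x in cube, ∫ y in cube, K (y - x) * ∑ i, (w y i - w x i) ^ 2
      ≤ ∫ x in cube, ∫ y in cube, K (y - x) * (3 * A ^ 2) := by
    have c1 : Continuous (fun p : V3 × V3 => K (p.2 - p.1) * ∑ i, (w p.2 i - w p.1 i) ^ 2) := by
      fun_prop
    have c2 : Continuous (fun p : V3 × V3 => K (p.2 - p.1) * (3 * A ^ 2)) := by fun_prop
    rw [← setIntegral_cube_prod c1, ← setIntegral_cube_prod c2]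
    refine setIntegral_mono_on (integrableOn_cube_prod c1) (integrableOn_cube_prod c2)
      (measurableSet_cube.prod measurableSet_cube) ?_
    rintro ⟨x, y⟩ ⟨hx, -⟩
    by_cases hz : K (y - x) = 0
    · simp [hz]
    · exact mul_le_mul_of_nonneg_left (h.increment_sq hw.per hℓ hℓ1 hx (hKn _ hz)) (hK0 _)
  simp only [integral_mul_const, hK.integral_sub_right, setIntegral_const, volume_real_cube,
    one_smul] at h1
  rw [energy_defect hK hc] at h0 h1
  rw [abs_le]
  constructor <;> nlinarith

/-- The flux is an average of increments cubed against `∇K`, which costs a factor `1/ℓ`. -/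
lemma abs_flux_le {K : V3 → ℝ} (hK : PerKernel K) {D : ℝ}
    (hKn : ∀ j z, pd K j z ≠ 0 → ∃ n : Fin 3 → ℤ, ∀ i, |z i - n i| ≤ ℓ)
    (hD : ∀ j, ℓ * ∫ z in cube, |pd K j z| ≤ D * ∫ z in cube, K z)
    (hℓ : 0 < ℓ) (hℓ1 : ℓ ≤ 1) (hA : 0 ≤ A) (hw : DivFreeField w) (h : OscLE w ℓ A) :
    |flux K w w| ≤ 9 / 4 * D * A ^ 3 / ℓ * ∫ z in cube, K z := by
  have hc := hw.cont
  have hk := hK.continuous_pd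
  have c1 : Continuous (fun p : V3 × V3 =>
      (∑ j, pd K j (p.2 - p.1) * (w p.2 j - w p.1 j)) * ∑ i, (w p.2 i - w p.1 i) ^ 2) := by
    fun_prop
  have c2 : Continuous (fun p : V3 × V3 => (∑ j, |pd K j (p.2 - p.1)|) * (3 * A ^ 3)) :=
    (continuous_finsetSum _ fun j _ => ((hk j).comp (by fun_prop)).abs).mul continuous_const
  have h1 : |4 * flux K w w| ≤ ∫ x in cube, ∫ y in cube, (∑ j, |pd K j (y - x)|) * (3 * A ^ 3) := by
    rw [← flux_eq_increments hK hw, ← setIntegral_cube_prod c1, ← setIntegral_cube_prod c2]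
    refine (abs_integral_le_integral_abs).trans ?_
    refine setIntegral_mono_on (integrableOn_cube_prod c1.abs) (integrableOn_cube_prod c2)
      (measurableSet_cube.prod measurableSet_cube) ?_
    rintro ⟨x, y⟩ ⟨hx, -⟩
    simp only
    rw [abs_mul, abs_of_nonneg (Finset.sum_nonneg fun i _ => sq_nonneg (w y i - w x i))]
    by_cases hz : ∀ j, pd K j (y - x) = 0
    · simp [hz]
    · push Not at hz
      obtain ⟨j₀, hj₀⟩ := hz
      have hn := hKn _ _ hj₀
      have h2 := h.increment_sq hw.per hℓ.le hℓ1 hx hn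
      have h3 : |∑ j, pd K j (y - x) * (w y j - w x j)| ≤ (∑ j, |pd K j (y - x)|) * A := by
        rw [Finset.sum_mul]
        refine (Finset.abs_sum_le_sum_abs _ _).trans (Finset.sum_le_sum fun j _ => ?_)
        rw [abs_mul]
        exact mul_le_mul_of_nonneg_left (h.increment hw.per hℓ.le hℓ1 hx hn j) (abs_nonneg _)
      calc _ ≤ ((∑ j, |pd K j (y - x)|) * A) * (3 * A ^ 2) := by gcongr
        _ = _ := by ring
  have hI : ∀ x, ∫ y in cube, (∑ j, |pd K j (y - x)|) * (3 * A ^ 3)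
      = (∑ j, ∫ z in cube, |pd K j z|) * (3 * A ^ 3) := by
    intro x
    rw [integral_mul_const, integral_finsetSum]
    · congr 1
      refine Finset.sum_congr rfl fun j _ => ?_
      have hp : Per (fun z => |pd K j z|) := fun z n => by simp only [hK.per_pd j z n]
      rw [← hp.integral_add (-x)]
      simp only [neg_add_eq_sub]
    · intro j _
      exact integrableOn_cube (f := fun y => |pd K j (y - x)|)
        ((hk j).comp (by fun_prop)).abs
  simp only [hI, setIntegral_const, volume_real_cube, one_smul] at h1
  have hD' : ∀ j, ∫ z in cube, |pd K j z| ≤ D / ℓ * ∫ z in cube, K z := fun j => by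
    rw [div_mul_eq_mul_div, le_div_iff₀ hℓ, mul_comm]
    exact hD j
  have h4 : (∑ j, ∫ z in cube, |pd K j z|) ≤ 3 * (D / ℓ * ∫ z in cube, K z) := by
    rw [Fin.sum_univ_three]
    linarith [hD' 0, hD' 1, hD' 2]
  rw [abs_mul, abs_of_pos (by norm_num : (0:ℝ) < 4)] at h1
  have h5 : 4 * |flux K w w| ≤ 3 * (D / ℓ * ∫ z in cube, K z) * (3 * A ^ 3) := by
    refine h1.trans ?_
    gcongr
  calc |flux K w w| ≤ (3 * (D / ℓ * ∫ z in cube, K z) * (3 * A ^ 3)) / 4 := by linarith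
    _ = _ := by ring

end estimates

/-- The energy increment in terms of the spatial oscillation `A` at scale `ℓ`: regularization
changes the energy by `O(A²)`, and the regularized energy changes at rate `O(A³/ℓ)`. -/
lemma exists_energy_increment_le : ∃ D > 0, ∀ {T : ℝ} {u : ℝ → V3 → V3}, GlobalFlow T u →
    ∀ {s t ℓ A : ℝ}, 0 ≤ s → s ≤ t → t ≤ T → 0 < ℓ → ℓ ≤ 1 → 0 ≤ A →
    (∀ r ∈ Set.Icc s t, OscLE (u r) ℓ A) →
    |energy u t - energy u s| ≤ 2 * A ^ 2 + D * A ^ 3 / ℓ * (t - s) := by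
  obtain ⟨D, hD0, hD⟩ := exists_kernel
  refine ⟨3 * D, by positivity, fun {T u} hu {s t ℓ A} hs hst ht hℓ hℓ1 hA hosc => ?_⟩
  obtain ⟨K, hK, hK0, hKn, hKn', hZ, hKD⟩ := hD ℓ hℓ hℓ1
  set Z := ∫ z in cube, K z with hZdef
  have hcorr : |corr K (u t) (u t) - corr K (u s) (u s)|
      ≤ 9 / 2 * D * A ^ 3 / ℓ * Z * (t - s) := by
    rcases hst.eq_or_lt with rfl | hlt
    · simp
    have hcont : Continuous (fun r => corr K (u r) (u r)) :=
      (hu.continuous_corr hK).comp (continuous_id.prodMk continuous_id)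
    obtain ⟨c, hc, hc'⟩ := exists_hasDerivAt_eq_slope (fun r => corr K (u r) (u r))
      (fun r => -(2 * flux K (u r) (u r))) hlt hcont.continuousOn
      (fun r hr => hu.hasDerivAt_corr_diag hK ⟨hs.trans_lt hr.1, hr.2.trans_le ht⟩)
    have h1 := abs_flux_le hK hKn' hKD hℓ hℓ1 hA (hu.field c) (hosc c ⟨hc.1.le, hc.2.le⟩)
    have hpos : 0 < t - s := sub_pos.2 hlt
    rw [eq_div_iff hpos.ne'] at hc'
    rw [← hc', abs_mul, abs_of_pos hpos, abs_neg, abs_mul, abs_of_pos (by norm_num : (0:ℝ) < 2)]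
    refine mul_le_mul_of_nonneg_right ?_ hpos.le
    calc 2 * |flux K (u c) (u c)| ≤ 2 * (9 / 4 * D * A ^ 3 / ℓ * Z) := by gcongr
      _ = _ := by ring
  have e1 := energy_defect_le hK hK0 hKn hℓ.le hℓ1 (hu.field t) (hosc t ⟨hst, le_rfl⟩)
  have e2 := energy_defect_le hK hK0 hKn hℓ.le hℓ1 (hu.field s) (hosc s ⟨le_rfl, hst⟩)
  have h3 : Z * |energy u t - energy u s|
      ≤ Z * (3 / 2 * A ^ 2 + 9 / 4 * D * A ^ 3 / ℓ * (t - s)) := by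
    rw [← abs_of_pos hZ, ← abs_mul, abs_of_pos hZ]
    simp only [energy]
    rw [← hZdef] at e1 e2
    rw [abs_le] at e1 e2 hcorr ⊢
    constructor <;> ring_nf at * <;> linarith
  have h4 := le_of_mul_le_mul_left h3 hZ
  have h5 : 0 ≤ D * A ^ 3 / ℓ * (t - s) := mul_nonneg (by positivity) (sub_nonneg.2 hst)
  have h6 : 9 / 4 * D * A ^ 3 / ℓ * (t - s) = 9 / 4 * (D * A ^ 3 / ℓ * (t - s)) := by ring
  have h7 : 3 * D * A ^ 3 / ℓ * (t - s) = 3 * (D * A ^ 3 / ℓ * (t - s)) := by ring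
  nlinarith [sq_nonneg A]

/-! ### Hölder energy and the Hausdorff measure of its singular times -/

/-- A continuous function on `[0,T]` that is locally constant off `B` and `d`-Hölder can only be
non-constant if `B` has positive `d`-dimensional Hausdorff measure: otherwise its range would be a
null set containing a nondegenerate interval. -/
lemma hausdorffMeasure_ne_zero_of_holder {e : ℝ → ℝ} {T : ℝ} {B : Set ℝ} {C d : NNReal}
    (hd : 0 < d) (he : HolderOnWith C d e (Set.Icc 0 T)) (hB : B ⊆ Set.Icc 0 T)
    (hloc : ∀ t ∈ Set.Ioo 0 T \ B, ∀ᶠ r in 𝓝 t, e r = e t)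
    (hne : ∃ s ∈ Set.Icc 0 T, ∃ t ∈ Set.Icc 0 T, e s ≠ e t) :
    μH[(d : ℝ)] B ≠ 0 := by
  intro h0
  have hnull : volume (e '' B) = 0 := by
    rw [← hausdorffMeasure_real]
    have h1 := (he.mono hB).hausdorffMeasure_image_le hd zero_le_one
    rw [mul_one, h0, mul_zero] at h1
    exact le_antisymm h1 bot_le
  have hcount : (e '' (Set.Ioo 0 T \ B)).Countable := by
    obtain ⟨S, -, hSc, hS⟩ := TopologicalSpace.countable_cover_nhdsWithin
      (f := fun t => {r | e r = e t}) (s := Set.Ioo 0 T \ B)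
      (fun t ht => mem_nhdsWithin_of_mem_nhds (hloc t ht))
    refine (hSc.image e).mono ?_
    rintro _ ⟨r, hr, rfl⟩
    obtain ⟨t, ht, hrt⟩ := Set.mem_iUnion₂.1 (hS hr)
    exact ⟨t, ht, (hrt : e r = e t).symm⟩
  have hcover : e '' Set.Icc 0 T ⊆ e '' B ∪ (e '' (Set.Ioo 0 T \ B) ∪ {e 0, e T}) := by
    rintro _ ⟨r, hr, rfl⟩
    by_cases hrB : r ∈ B
    · exact Or.inl ⟨r, hrB, rfl⟩
    right
    rcases hr.1.eq_or_lt with rfl | h1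
    · right; simp
    rcases hr.2.eq_or_lt with rfl | h2
    · right; simp
    exact Or.inl ⟨r, ⟨⟨h1, h2⟩, hrB⟩, rfl⟩
  have hzero : volume (e '' Set.Icc 0 T) = 0 := by
    refine measure_mono_null hcover (measure_union_null hnull (measure_union_null
      (hcount.measure_zero _) (Set.Countable.measure_zero ?_ _)))
    exact (Set.toFinite _).countable
  obtain ⟨s, hs, t, ht, hst⟩ := hne
  have hsub : Set.uIcc s t ⊆ Set.Icc 0 T := Set.ordConnected_Icc.uIcc_subset hs ht
  have h1 : Set.uIcc (e s) (e t) ⊆ e '' Set.Icc 0 T :=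
    (intermediate_value_uIcc ((he.continuousOn hd).mono hsub)).trans (Set.image_mono hsub)
  have h2 := measure_mono_null h1 hzero
  rw [Real.volume_interval, ENNReal.ofReal_eq_zero] at h2
  exact hst (sub_eq_zero.1 (abs_nonpos_iff.1 h2)).symm

section
variable {T : ℝ} {v : ℝ → V3 → V3}

/-- Extending a weak solution to all times, constantly outside `[0,T]`. -/
lemma WeakEuler.globalFlow (hT : 0 < T) (hv : WeakEuler T v) :
    GlobalFlow T (fun t => v (Set.projIcc 0 T hT.le t)) where
  cont := by
    have h : Continuous (fun p : ℝ × V3 => ((Set.projIcc 0 T hT.le p.1 : ℝ), p.2)) := by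
      have := continuous_projIcc (h := hT.le)
      fun_prop
    exact hv.cont.comp_continuous h fun p => ⟨Subtype.coe_prop _, Set.mem_univ _⟩
  field t :=
    { cont := hv.cont.comp_continuous
        (f := fun x : V3 => ((Set.projIcc 0 T hT.le t : ℝ), x)) (by fun_prop)
        fun x => ⟨Subtype.coe_prop (Set.projIcc 0 T hT.le t), Set.mem_univ x⟩
      per := hv.per _
      divfree := fun ψ hψ hp => hv.divfree ψ hψ hp _ (Subtype.coe_prop _) }
  weak φ h1 h2 h3 h4 := by
    refine Eq.trans ?_ (hv.weak φ h1 h2 h3 h4)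
    refine setIntegral_congr_fun measurableSet_Ioo fun t ht => ?_
    simp only [Set.projIcc_of_mem hT.le (Set.Ioo_subset_Icc_self ht)]

/-- The energy increment estimate for a weak solution on `[0,T]`. -/
lemma WeakEuler.exists_energy_increment_le (hT : 0 < T) (hv : WeakEuler T v) :
    ∃ D > 0, ∀ {s t ℓ A : ℝ}, 0 ≤ s → s ≤ t → t ≤ T → 0 < ℓ → ℓ ≤ 1 → 0 ≤ A →
    (∀ r ∈ Set.Icc s t, OscLE (v r) ℓ A) →
    |energy v t - energy v s| ≤ 2 * A ^ 2 + D * A ^ 3 / ℓ * (t - s) := by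
  obtain ⟨D, hD0, hD⟩ := _root_.exists_energy_increment_le
  refine ⟨D, hD0, fun {s t ℓ A} hs hst ht hℓ hℓ1 hA hosc => ?_⟩
  have heq : ∀ r ∈ Set.Icc s t, v (Set.projIcc 0 T hT.le r) = v r := fun r hr => by
    rw [Set.projIcc_of_mem hT.le ⟨hs.trans hr.1, hr.2.trans ht⟩]
  have h := hD (hv.globalFlow hT) hs hst ht hℓ hℓ1 hA fun r hr => by
    simp only [heq r hr]
    exact hosc r hr
  simpa only [energy, heq t ⟨hst, le_rfl⟩, heq s ⟨le_rfl, hst⟩] using h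

/-- Optimizing the scale `ℓ` in the increment estimate makes the energy of a `C^β` solution
`2β/(1-β)`-Hölder. -/
lemma WeakEuler.exists_energy_holder (hT : 0 < T) (hv : WeakEuler T v) {β C : ℝ} (hβ0 : 0 < β)
    (hβ1 : β < 1) (hC : 0 < C) (hH : ∀ t ∈ Set.Icc (0:ℝ) T, ∀ x y : V3,
      ‖v t x - v t y‖ ≤ C * ‖x - y‖ ^ β) :
    ∃ M : NNReal, HolderOnWith M (2 * β / (1 - β)).toNNReal (energy v) (Set.Icc 0 T) := by
  obtain ⟨D, hD0, hD⟩ := hv.exists_energy_increment_le hT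
  have hβ : 0 < 1 - β := by linarith
  set d := 2 * β / (1 - β) with hd
  have hd0 : 0 < d := by positivity
  set M := (2 * C ^ 2 + D * C ^ 3 * T) / T ^ d with hM
  have hM0 : 0 ≤ M := by positivity
  have key : ∀ s t, 0 ≤ s → s < t → t ≤ T → |energy v t - energy v s| ≤ M * (t - s) ^ d := by
    intro s t hs hst ht
    set τ := (t - s) / T with hτ
    have hts : 0 < t - s := sub_pos.2 hst
    have hτ0 : 0 < τ := by positivity
    have hτ1 : τ ≤ 1 := by
      rw [hτ, div_le_one hT]
      linarith
    -- the scale balancing the terms `ℓ ^ (2β)` and `τ ℓ ^ (3β - 1)`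
    set ℓ := τ ^ (1 / (1 - β)) with hℓ
    have hℓ0 : 0 < ℓ := rpow_pos_of_pos hτ0 _
    have hℓ1 : ℓ ≤ 1 := rpow_le_one hτ0.le hτ1 (by positivity)
    have h1 := hD (A := C * ℓ ^ β) hs hst.le ht hℓ0 hℓ1 (by positivity) (fun r hr x _ y _ hxy => by
      refine (hH r ⟨hs.trans hr.1, hr.2.trans ht⟩ y x).trans ?_
      gcongr)
    have e1 : (ℓ ^ β) ^ 2 = τ ^ d := by
      rw [hℓ, ← rpow_natCast, ← rpow_mul hτ0.le, ← rpow_mul hτ0.le]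
      congr 1
      rw [hd]
      push_cast
      field_simp
    have e2 : (ℓ ^ β) ^ 3 / ℓ * τ = τ ^ d := by
      rw [hℓ, ← rpow_natCast, ← rpow_mul hτ0.le, ← rpow_mul hτ0.le, ← rpow_sub hτ0,
        ← rpow_add_one hτ0.ne']
      congr 1
      rw [hd]
      push_cast
      field_simp
      ring
    have e3 : τ ^ d = (t - s) ^ d / T ^ d := div_rpow hts.le hT.le _
    have e4 : t - s = T * τ := by
      rw [hτ]
      field_simp
    refine h1.trans (le_of_eq ?_)
    calc 2 * (C * ℓ ^ β) ^ 2 + D * (C * ℓ ^ β) ^ 3 / ℓ * (t - s)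
        = 2 * C ^ 2 * (ℓ ^ β) ^ 2 + D * C ^ 3 * T * ((ℓ ^ β) ^ 3 / ℓ * τ) := by rw [e4]; ring
      _ = M * (t - s) ^ d := by rw [e1, e2, e3, hM]; ring
  refine ⟨M.toNNReal, fun s hs t ht => ?_⟩
  have h : dist (energy v s) (energy v t) ≤ M * dist s t ^ d := by
    rcases lt_trichotomy s t with h | rfl | h
    · rw [dist_comm, dist_comm s t, Real.dist_eq, Real.dist_eq, abs_of_pos (sub_pos.2 h)]
      exact key s t hs.1 h ht.2
    · rw [dist_self, dist_self]
      positivity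
    · rw [Real.dist_eq, Real.dist_eq, abs_of_pos (sub_pos.2 h)]
      exact key t s ht.1 h hs.2
  rw [edist_dist, edist_dist, Real.coe_toNNReal _ hd0.le,
    ENNReal.ofReal_rpow_of_nonneg dist_nonneg hd0.le]
  change _ ≤ ENNReal.ofReal M * _
  rw [← ENNReal.ofReal_mul hM0]
  exact ENNReal.ofReal_le_ofReal h

/-- The energy is locally constant at times around which the solution is smooth. -/
lemma WeakEuler.energy_locally_const (hT : 0 < T) (hv : WeakEuler T v) {B : Set ℝ}
    (hB : IsClosed B) (hsmooth : ContDiffOn ℝ ∞ (fun p : ℝ × V3 => v p.1 p.2)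
      ((Set.Icc 0 T \ B) ×ˢ Set.univ)) {t₀ : ℝ} (ht₀ : t₀ ∈ Set.Ioo 0 T \ B) :
    ∀ᶠ t in 𝓝 t₀, energy v t = energy v t₀ := by
  obtain ⟨D, hD0, hD⟩ := hv.exists_energy_increment_le hT
  obtain ⟨ε, hε, hsub⟩ := Metric.nhds_basis_closedBall.mem_iff.1
    ((isOpen_Ioo.sdiff hB).mem_nhds ht₀)
  set I := Metric.closedBall t₀ ε with hI
  set Q : Set V3 := Set.Icc (fun _ => -1) (fun _ => 2) with hQ
  have hsub' : I ×ˢ Q ⊆ (Set.Icc 0 T \ B) ×ˢ Set.univ := fun p hp =>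
    ⟨⟨Set.Ioo_subset_Icc_self (hsub hp.1).1, (hsub hp.1).2⟩, Set.mem_univ _⟩
  obtain ⟨L, hL⟩ := (hsmooth.mono hsub').exists_lipschitzOnWith (by simp)
    ((convex_closedBall t₀ ε).prod (convex_Icc _ _))
    ((isCompact_closedBall t₀ ε).prod isCompact_Icc)
  have key : ∀ s ∈ I, ∀ t ∈ I, s ≤ t → energy v t = energy v s := by
    intro s hs t ht hst
    have hIc : Set.Icc s t ⊆ I := (convex_closedBall t₀ ε).ordConnected.out hs ht
    have h1 : ∀ ℓ : ℝ, 0 < ℓ → ℓ ≤ 1 → |energy v t - energy v s|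
        ≤ (2 * (L : ℝ) ^ 2 + D * (L : ℝ) ^ 3 * (t - s)) * ℓ ^ 2 := by
      intro ℓ hℓ hℓ1
      have h2 := hD (A := L * ℓ) (hsub hs).1.1.le hst (hsub ht).1.2.le hℓ hℓ1 (by positivity)
        (fun r hr x hx y hy hxy => by
          have h3 := hL.dist_le_mul (r, y) ⟨hIc hr, fun i => (hy i).1, fun i => (hy i).2⟩
            (r, x) ⟨hIc hr, fun i => by simpa using (by linarith [(hx i).1] : -1 ≤ x i),
              fun i => by simpa using (by linarith [(hx i).2] : x i ≤ 2)⟩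
          rw [dist_eq_norm, Prod.dist_eq, dist_self, max_eq_right dist_nonneg, dist_eq_norm] at h3
          exact h3.trans (by gcongr))
      refine h2.trans (le_of_eq ?_)
      field_simp
    have h2 : Filter.Tendsto
        (fun ℓ : ℝ => (2 * (L : ℝ) ^ 2 + D * (L : ℝ) ^ 3 * (t - s)) * ℓ ^ 2) (𝓝[>] 0) (𝓝 0) := by
      have : Continuous (fun ℓ : ℝ => (2 * (L : ℝ) ^ 2 + D * (L : ℝ) ^ 3 * (t - s)) * ℓ ^ 2) := by
        fun_prop
      simpa using (this.tendsto 0).mono_left nhdsWithin_le_nhds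
    have h3 : |energy v t - energy v s| ≤ 0 := ge_of_tendsto h2 (by
      filter_upwards [Ioc_mem_nhdsGT (zero_lt_one (α := ℝ))] with ℓ hℓ using h1 ℓ hℓ.1 hℓ.2)
    exact sub_eq_zero.1 (abs_nonpos_iff.1 h3)
  have h0 : t₀ ∈ I := Metric.mem_closedBall_self hε.le
  filter_upwards [Metric.closedBall_mem_nhds t₀ hε] with t ht
  rcases le_total t t₀ with h | h
  · exact (key t ht t₀ h0 h).symm
  · exact key t₀ h0 t ht h

end

/-- **Theorem 1 (lower bound on the singular set in time).**
For `0 < β < 1/3`, a non-conservative `C^β(𝕋³×[0,T])` weak solution of the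
incompressible Euler equations which is smooth on `𝕋³ × ([0,T] ∖ B)` for a closed set
`B ⊆ [0,T]` satisfies `H^{2β/(1-β)}(B) > 0`, and in particular
`dim_H(B) ≥ 2β/(1-β)`. -/
theorem singular_times_lower_bound
    (β T : ℝ) (hβ0 : 0 < β) (hβ1 : β < 1/3) (hT : 0 < T)
    (v : ℝ → V3 → V3)
    (hHolder : ∃ C > 0, ∀ s ∈ Set.Icc (0:ℝ) T, ∀ t ∈ Set.Icc (0:ℝ) T, ∀ x y : V3,
      ‖v t x - v s y‖ ≤ C * (|t - s| + ‖x - y‖) ^ β)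
    (hweak : WeakEuler T v)
    (hnoncons : ∃ s ∈ Set.Icc (0:ℝ) T, ∃ t ∈ Set.Icc (0:ℝ) T, energy v s ≠ energy v t)
    (B : Set ℝ) (hBsub : B ⊆ Set.Icc 0 T) (hBclosed : IsClosed B)
    (hsmooth : ContDiffOn ℝ (⊤:ℕ∞) (fun p : ℝ × V3 => v p.1 p.2)
      ((Set.Icc 0 T \ B) ×ˢ Set.univ)) :
    0 < μH[2*β/(1-β)] B ∧ ENNReal.ofReal (2*β/(1-β)) ≤ dimH B := by
  obtain ⟨C, hC, hH⟩ := hHolder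
  have hβ : 0 < 1 - β := by linarith
  have hd0 : 0 < 2 * β / (1 - β) := by positivity
  obtain ⟨M, hM⟩ := hweak.exists_energy_holder hT hβ0 (by linarith) hC
    (fun t ht x y => by simpa using hH t ht t ht x y)
  have hne := hausdorffMeasure_ne_zero_of_holder (Real.toNNReal_pos.2 hd0) hM hBsub
    (fun t ht => hweak.energy_locally_const hT hBclosed hsmooth ht) hnoncons
  refine ⟨?_, le_dimH_of_hausdorffMeasure_ne_zero hne⟩
  rw [Real.coe_toNNReal _ hd0.le] at hne
  exact pos_iff_ne_zero.2 hne
end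
end

section
/- Let β ∈ (0,1/3). Then for every α₀ > 0, inf_{b ∈ (1, (1−β)/(2β))} inf_{γ ∈ (0, (b−1)(1−β−2bβ)/(b+1))} inf_{α ∈ (0,α₀)} [ 1 − γb / ((b−1)(1−β+3α+γ)) ] = 1/2 + (1/2)·(2β/(1−β)). -/
/-!
Write `A = 1 - β`, so that the claimed infimum is `1 - (A - 2β)/(2A)`.

For the lower bound (`fraction_le`), `γ/(A + 3α + γ)` increases in `γ` and decreases in `α`, so the
subtracted fraction is at most its value at `α = 0`, `γ = (b-1)(A-2bβ)/(b+1)`, which is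
`(A - 2bβ)/(2(A - β(b-1)))`; this decreases in `b` and equals `(A - 2β)/(2A)` at `b = 1`.

For sharpness, along the admissible curve `b = 1 + s`, `α = s`,
`γ = (1 - s)(b-1)(A-2bβ)/(b+1)`, the factor `b - 1` cancels and the bound extends continuously to
`s = 0`, with the value `1 - (A - 2β)/(2A)` there.
-/

/-- The subtracted fraction is bounded by its limit as `α ↓ 0`, `γ` increases to its upper bound
and `b ↓ 1`. -/
lemma fraction_le {β b γ α : ℝ} (hβ0 : 0 < β) (hβ1 : β < 1/3) (hb : 1 < b) (hγ : 0 < γ)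
    (hγ' : γ < (b-1)*(1-β-2*b*β)/(b+1)) (hα : 0 < α) :
    γ*b/((b-1)*(1-β+3*α+γ)) ≤ (1-3*β)/(2*(1-β)) := by
  have hb' : 0 < b - 1 := by linarith
  have hA : 0 < 1 - β := by linarith
  have hC : 0 < 1 - 3*β := by linarith
  rw [lt_div_iff₀ (by linarith)] at hγ'
  rw [div_le_div_iff₀ (by positivity) (by positivity)]
  have hα' : 0 < (1-3*β)*(b-1)*(3*α) := by positivity
  -- The terms in `γ` are collected with coefficient `(1-β)(b+1) + 2β(b-1) > 0`.
  have hc : 0 < (1-β)*(b+1) + 2*β*(b-1) := by positivity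
  have h1 := mul_le_mul_of_nonneg_right hγ'.le hc.le
  have h2 : (1-β-2*b*β)*((1-β)*(b+1) + 2*β*(b-1)) ≤ (1-3*β)*(1-β)*(b+1) := by
    have h3 : 0 ≤ 2*β*(b-1)*((1-β)*(b+1) + 2*β*(b-1) - (1-3*β)) := by
      have h4 : 0 < (1-β)*(b-1) := by positivity
      have h5 : 0 < 2*β*(b-1) := by positivity
      apply mul_nonneg h5.le
      nlinarith
    linarith
  have h6 := mul_le_mul_of_nonneg_left h2 hb'.le
  have h7 : γ*((1-β)*(b+1) + 2*β*(b-1)) ≤ (1-3*β)*(1-β)*(b-1) := by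
    refine le_of_mul_le_mul_right ?_ (show 0 < b + 1 by linarith)
    linarith
  linarith

/-- **The infimum of the dimension bound (2.21).** For `0 < β < 1/3` and any `α₀ > 0`,
the infimum over admissible `b`, `γ` and `α ∈ (0,α₀)` of
`1 − γb/((b−1)(1−β+3α+γ))` equals `1/2 + (1/2)·(2β/(1−β))`. -/
theorem infimum_dimension_bound (β : ℝ) (hβ0 : 0 < β) (hβ1 : β < 1/3)
    (α₀ : ℝ) (hα₀ : 0 < α₀) :
    sInf {d : ℝ | ∃ b γ α : ℝ,
        1 < b ∧ b < (1-β)/(2*β) ∧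
        0 < γ ∧ γ < (b-1)*(1-β-2*b*β)/(b+1) ∧
        0 < α ∧ α < α₀ ∧
        d = 1 - γ*b/((b-1)*(1-β+3*α+γ))}
      = 1/2 + (1/2) * (2*β/(1-β)) := by
  have hA : 0 < 1 - β := by linarith
  have hval : 1/2 + (1/2) * (2*β/(1-β)) = 1 - (1-3*β)/(2*(1-β)) := by
    field_simp
    ring
  rw [hval]
  -- The dimension bound along the curve, with the factor `b - 1 = s` cancelled.
  let f : ℝ → ℝ := fun s => 1 - (1-s)*(1-3*β-2*β*s)/(2+s)*(1+s)/
    (1-β+3*s+(1-s)*s*(1-3*β-2*β*s)/(2+s))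
  have hf : ContinuousAt f 0 := by
    have h2 : (2:ℝ) + 0 ≠ 0 := by norm_num
    have h3 : 1-β+3*0+(1-0)*0*(1-3*β-2*β*0)/(2+0) ≠ 0 := by
      simpa using hA.ne'
    have hg : ContinuousAt (fun s : ℝ => (1-s)*s*(1-3*β-2*β*s)/(2+s)) 0 :=
      ContinuousAt.div (by fun_prop) (by fun_prop) h2
    have hk : ContinuousAt (fun s : ℝ => (1-s)*(1-3*β-2*β*s)/(2+s)) 0 :=
      ContinuousAt.div (by fun_prop) (by fun_prop) h2
    exact continuousAt_const.sub (ContinuousAt.div (hk.mul (by fun_prop))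
      (ContinuousAt.add (by fun_prop) hg) h3)
  have hf0 : f 0 = 1 - (1-3*β)/(2*(1-β)) := by
    simp only [f]
    field_simp
    ring
  have hex : ∀ w, 1 - (1-3*β)/(2*(1-β)) < w → ∃ s, 0 < s ∧ s < 1 ∧ s < α₀ ∧
      s < (1-3*β)/(2*β) ∧ f s < w := by
    intro w hw
    have hpos : 0 < (1-3*β)/(2*β) := div_pos (by linarith) (by linarith)
    have e1 : ∀ᶠ s in nhds (0:ℝ), f s < w := hf.eventually_lt_const (by rwa [hf0])
    have e2 := (((eventually_lt_nhds (zero_lt_one (α := ℝ))).and (eventually_lt_nhds hα₀)).and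
      ((eventually_lt_nhds hpos).and e1)).filter_mono
        (nhdsWithin_le_nhds (s := Set.Ioi (0:ℝ)))
    obtain ⟨s, ⟨⟨h1, h2⟩, h3, h4⟩, h0⟩ := (e2.and self_mem_nhdsWithin).exists
    exact ⟨s, h0, h1, h2, h3, h4⟩
  have hmem : ∀ s, 0 < s → s < 1 → s < α₀ → s < (1-3*β)/(2*β) →
      f s ∈ {d : ℝ | ∃ b γ α : ℝ,
        1 < b ∧ b < (1-β)/(2*β) ∧
        0 < γ ∧ γ < (b-1)*(1-β-2*b*β)/(b+1) ∧
        0 < α ∧ α < α₀ ∧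
        d = 1 - γ*b/((b-1)*(1-β+3*α+γ))} := by
    intro s h0 h1 h2 h3
    rw [lt_div_iff₀ (by linarith)] at h3
    have hg : 0 < 1-3*β-2*β*s := by linarith
    have h1' : 0 < 1 - s := by linarith
    refine ⟨1+s, (1-s)*s*(1-3*β-2*β*s)/(2+s), s, by linarith, ?_, by positivity, ?_, h0, h2, ?_⟩
    · rw [lt_div_iff₀ (by linarith)]
      linarith
    · have hq : (1+s-1)*(1-β-2*(1+s)*β)/(1+s+1) = s*(1-3*β-2*β*s)/(2+s) := by
        congr 1 <;> ring
      rw [hq]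
      have hp : 0 < s*(1-3*β-2*β*s) := by positivity
      gcongr
      nlinarith
    · have hD : 0 < 1-β+3*s+(1-s)*s*(1-3*β-2*β*s)/(2+s) := by positivity
      simp only [f]
      generalize hDD : 1-β+3*s+(1-s)*s*(1-3*β-2*β*s)/(2+s) = D at *
      rw [add_sub_cancel_left]
      field_simp
  apply csInf_eq_of_forall_ge_of_forall_gt_exists_lt
  · obtain ⟨s, h0, h1, h2, h3, -⟩ := hex _ (lt_add_one _)
    exact ⟨f s, hmem s h0 h1 h2 h3⟩
  · rintro d ⟨b, γ, α, hb, -, hγ, hγ', hα, -, rfl⟩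
    exact sub_le_sub_left (fraction_le hβ0 hβ1 hb hγ hγ' hα) 1
  · intro w hw
    obtain ⟨s, h0, h1, h2, h3, h4⟩ := hex w hw
    exact ⟨f s, hmem s h0 h1 h2 h3, h4⟩
end
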